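/- arXiv:2401.04019 — 8 statements merged into one kernel-verified Lean document; each statement's English description precedes it below -/
import Mathlib

section
/- Let R and S be integers with R ≥ 2, 1 ≤ S < R and 2S ≠ R, and let n ≥ 0. Then the number of partitions of n all of whose parts are congruent to S or R−S modulo R and in which S does not occur as a part is at least ρ_R(n). (This is the case k = 1 of the truncated Jacobi Triple Product conjecture: the coefficient a_{S,R,1}(n) is non-negative.) -/
/-- Case k = 1 of the truncated JTP conjecture: the number of partitions of `n`
with parts ≡ ±S (mod R) in which `S` does not occur is at least `ρ_R(n)`.
Here `ρ` is the function with `ρ(R·i(3i−1)/2) = (−1)^i` and `ρ = 0` elsewhere,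
and a partition is encoded as a multiset of positive parts. -/
theorem stmt0 (R S : ℕ) (hR : 2 ≤ R) (hS : 1 ≤ S) (hSR : S < R) (h2S : 2 * S ≠ R)
    (ρ : ℤ → ℤ)
    (hρ1 : ∀ i : ℤ, ρ ((R : ℤ) * (i * (3 * i - 1) / 2)) = (-1) ^ i.natAbs)
    (hρ2 : ∀ m : ℤ, (∀ i : ℤ, m ≠ (R : ℤ) * (i * (3 * i - 1) / 2)) → ρ m = 0)
    (n : ℤ) (hn : 0 ≤ n) :
    ρ n ≤ (Nat.card {s : Multiset ℕ // (s.sum : ℤ) = n ∧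
      (∀ a ∈ s, 0 < a ∧ (a % R = S % R ∨ a % R = (R - S) % R)) ∧ S ∉ s} : ℤ) := by
  have hle : ρ n ≤ 0 ∨ (∃ a b : ℕ, n = (R : ℤ) * (2 * a + 3 * b)) ∧ ρ n ≤ 1 := by
    by_cases h : ∃ i : ℤ, n = (R : ℤ) * (i * (3 * i - 1) / 2)
    · obtain ⟨i, hi⟩ := h
      have hv := hρ1 i
      rw [← hi] at hv
      rcases Int.even_or_odd i with he | ho
      · right
        have hv1 : ρ n = 1 := by
          rw [hv]; exact Even.neg_one_pow (Int.natAbs_even.mpr he)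
        refine ⟨?_, hv1.le⟩
        obtain ⟨j, hj⟩ := he
        have hm : i * (3 * i - 1) / 2 = j * (6 * j - 1) := by
          rw [hj, show (j + j) * (3 * (j + j) - 1) = 2 * (j * (6 * j - 1)) by ring]
          exact Int.mul_ediv_cancel_left _ (by norm_num)
        rw [hm] at hi
        have hm2 : j * (6 * j - 1) = 0 ∨ 2 ≤ j * (6 * j - 1) := by
          rcases lt_trichotomy j 0 with h | h | h
          · right; nlinarith
          · left; simp [h]
          · right; nlinarith
        generalize j * (6 * j - 1) = m at hi hm2
        obtain ⟨a, b, hab⟩ : ∃ a b : ℕ, m = 2 * a + 3 * b := by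
          rcases Int.even_or_odd' m with ⟨c, hc | hc⟩
          · exact ⟨c.toNat, 0, by omega⟩
          · exact ⟨(c - 1).toNat, 1, by omega⟩
        exact ⟨a, b, by rw [hi, hab]⟩
      · left
        rw [hv, Odd.neg_one_pow (Int.natAbs_odd.mpr ho)]
        norm_num
    · left
      push Not at h
      exact (hρ2 n h).le
  rcases hle with h | ⟨⟨a, b, hab⟩, h1⟩
  · exact h.trans (Int.natCast_nonneg _)
  refine h1.trans ?_
  have hfin : Finite {s : Multiset ℕ // (s.sum : ℤ) = n ∧
      (∀ a ∈ s, 0 < a ∧ (a % R = S % R ∨ a % R = (R - S) % R)) ∧ S ∉ s} := by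
    refine Finite.of_injective (β := Nat.Partition n.toNat)
      (fun s => ⟨s.1, fun {i} hi => (s.2.2.1 i hi).1, by have := s.2.1; omega⟩) ?_
    intro s t hst
    exact Subtype.ext (congrArg Nat.Partition.parts hst)
  have hne : Nonempty {s : Multiset ℕ // (s.sum : ℤ) = n ∧
      (∀ a ∈ s, 0 < a ∧ (a % R = S % R ∨ a % R = (R - S) % R)) ∧ S ∉ s} := by
    refine ⟨⟨Multiset.replicate (a + b) (R + S) + Multiset.replicate a (R - S)
      + Multiset.replicate b (R + (R - S)), ?_, ?_, ?_⟩⟩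
    · rw [hab]
      simp only [Multiset.sum_add, Multiset.sum_replicate, smul_eq_mul]
      push_cast [Nat.cast_sub hSR.le]
      ring
    · intro x hx
      simp only [Multiset.mem_add, Multiset.mem_replicate] at hx
      rcases hx with (⟨_, rfl⟩ | ⟨_, rfl⟩) | ⟨_, rfl⟩
      · exact ⟨by omega, Or.inl (by simp)⟩
      · exact ⟨by omega, Or.inr rfl⟩
      · exact ⟨by omega, Or.inr (by simp)⟩
    · intro hx
      simp only [Multiset.mem_add, Multiset.mem_replicate] at hx
      omega
  exact Int.natCast_pos.mpr Nat.card_pos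
end

section
/- Let R and S be integers with R ≥ 2, 1 ≤ S < R and 2S ≠ R, and let n ≥ 0. Then y_{S,R,1}(n) − y_{S,R,0}(n) + ρ_R(n) ≥ 0. (This is the case k = 2 of the truncated Jacobi Triple Product conjecture: the coefficient a_{S,R,2}(n) is non-negative.) -/
/-- `y R S k n` is the number of partitions of `n − (k(k+1)R/2 − kS)` into parts
congruent to `S` or `R−S` mod `R` in which the part `S` occurs at most `2k` times
(`0` if `n − (k(k+1)R/2 − kS) < 0`). A partition is a multiset of positive parts. -/
noncomputable def y (R S k : ℕ) (n : ℤ) : ℕ :=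
  Nat.card {s : Multiset ℕ //
    (s.sum : ℤ) = n - ((k : ℤ) * (k + 1) * R / 2 - k * S) ∧
    (∀ a ∈ s, 0 < a ∧ (a % R = S % R ∨ a % R = (R - S) % R)) ∧
    s.count S ≤ 2 * k}


def YR (R S : ℕ) (s t : Multiset ℕ) : Prop :=
  (s = (R - S) ::ₘ t ∧ t.count S = 0) ∨
  (∃ u, s = (R + S) ::ₘ u ∧ t = S ::ₘ S ::ₘ u ∧ (R - S) ∉ u ∧ S ∉ u) ∨
  (∃ p u, s = p ::ₘ u ∧ t = S ::ₘ (p - R) ::ₘ u ∧ R < p ∧ p ≠ R + S ∧ S ∉ u ∧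
    (R - S) ∉ u ∧ (R + S) ∉ u ∧ ∀ x ∈ u, p ≤ x)

theorem YR_inj {R S : ℕ} (hS : 1 ≤ S) (hSR : S < R) {s s' t : Multiset ℕ}
    (h : YR R S s t) (h' : YR R S s' t) : s = s' := by
  have c0 : ∀ u : Multiset ℕ, S ∉ u → u.count S = 0 := fun u => Multiset.count_eq_zero_of_notMem
  rcases h with ⟨h1, h2⟩ | ⟨u, rfl, rfl, h3, h4⟩ | ⟨p, u, rfl, rfl, h3, h4, h5, h6, h7, h8⟩
  · rcases h' with ⟨h1', h2'⟩ | ⟨u, rfl, rfl, h3, h4⟩ | ⟨p, u, rfl, rfl, h3, h4, h5, h6, h7, h8⟩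
    · rw [h1, h1']
    · simp at h2
    · simp at h2
  · rcases h' with ⟨h1', h2'⟩ | ⟨u', rfl, h2', h3', h4'⟩ | ⟨p', u', rfl, h2', h3', h4', h5', h6', h7', h8'⟩
    · simp at h2'
    · simp at h2'
      rw [h2']
    · have := congrArg (Multiset.count S) h2'
      have hne : S ≠ p' - R := by omega
      simp [c0 _ h4, c0 _ h5', Multiset.count_cons_of_ne hne] at this
  · rcases h' with ⟨h1', h2'⟩ | ⟨u', rfl, h2', h3', h4'⟩ | ⟨p', u', rfl, h2', h3', h4', h5', h6', h7', h8'⟩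
    · simp at h2'
    · have := congrArg (Multiset.count S) h2'
      have hne : S ≠ p - R := by omega
      simp [c0 _ h4', c0 _ h5, Multiset.count_cons_of_ne hne] at this
    · rw [Multiset.cons_inj_right, Multiset.cons_eq_cons] at h2'
      rcases h2' with ⟨h, rfl⟩ | ⟨hne, cs, e1, e2⟩
      · have : p = p' := by omega
        rw [this]
      · have a1 := h8 (p' - R) (by simp [e1])
        have a2 := h8' (p - R) (by simp [e2])
        omega

/-- the extra element -/
theorem YR_extra {R S : ℕ} (hS : 1 ≤ S) (hSR : S < R) (h2S : 2 * S ≠ R) (m : ℕ) (hm : 1 ≤ m) :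
    ∃ w : Multiset ℕ, w.sum + R = m * R + S ∧
      (∀ a ∈ w, a = S ∨ a = R - S ∨ a = R + S) ∧ w.count S ≤ 2 ∧ ∀ s, ¬ YR R S s w := by
  have hne : S ≠ R - S := by omega
  have hne2 : S ≠ R + S := by omega
  have c0 : ∀ u : Multiset ℕ, S ∉ u → u.count S = 0 := fun u => Multiset.count_eq_zero_of_notMem
  obtain ⟨k, hk⟩ : ∃ k, m = 2 * k + 1 ∨ m = 2 * k + 2 := ⟨(m - 1) / 2, by omega⟩
  have hsum : (Multiset.replicate k (R - S) + Multiset.replicate k (R + S)).sum = 2 * k * R := by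
    simp only [Multiset.sum_add, Multiset.sum_replicate, smul_eq_mul]
    rw [← mul_add, show R - S + (R + S) = 2 * R by omega]; ring
  have hmem : ∀ a ∈ Multiset.replicate k (R - S) + Multiset.replicate k (R + S),
      a = R - S ∨ a = R + S := by
    intro a ha
    rcases Multiset.mem_add.1 ha with h | h
    · exact Or.inl (Multiset.eq_of_mem_replicate h)
    · exact Or.inr (Multiset.eq_of_mem_replicate h)
  have hnm : S ∉ Multiset.replicate k (R - S) + Multiset.replicate k (R + S) := by
    intro h; have := hmem _ h; omega
  rcases hk with rfl | rfl
  · refine ⟨S ::ₘ (Multiset.replicate k (R - S) + Multiset.replicate k (R + S)), ?_, ?_, ?_, ?_⟩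
    · rw [Multiset.sum_cons, hsum]; ring
    · intro a ha
      rcases Multiset.mem_cons.1 ha with h | h
      · exact Or.inl h
      · exact Or.inr (hmem a h)
    · rw [Multiset.count_cons_self, c0 _ hnm]; omega
    · rintro s (⟨h1, h2⟩ | ⟨u, rfl, h2, h3, h4⟩ | ⟨p, u, rfl, h2, h3, h4, h5, h6, h7, h8⟩)
      · simp at h2
      · have := congrArg (Multiset.count S) h2
        rw [Multiset.count_cons_self, Multiset.count_cons_self, Multiset.count_cons_self,
          c0 _ hnm, c0 _ h4] at this
        omega
      · rw [Multiset.cons_inj_right] at h2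
        have hk : k ≠ 0 := by
          rintro rfl
          have := congrArg Multiset.card h2
          simp at this
        have a1 : R - S ∈ (p - R) ::ₘ u := by rw [← h2]; simp [Multiset.mem_replicate, hk]
        have a2 : R + S ∈ (p - R) ::ₘ u := by rw [← h2]; simp [Multiset.mem_replicate, hk]
        simp only [Multiset.mem_cons, h6, h7, or_false] at a1 a2
        omega
  · refine ⟨S ::ₘ S ::ₘ (R - S) ::ₘ (Multiset.replicate k (R - S) + Multiset.replicate k (R + S)), ?_, ?_, ?_, ?_⟩
    · rw [Multiset.sum_cons, Multiset.sum_cons, Multiset.sum_cons, hsum]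
      have : S + (S + (R - S + 2 * k * R)) = S + R + 2 * k * R := by omega
      rw [this]; ring
    · intro a ha
      simp only [Multiset.mem_cons] at ha
      rcases ha with h | h | h | h
      · exact Or.inl h
      · exact Or.inl h
      · exact Or.inr (Or.inl h)
      · exact Or.inr (hmem a h)
    · rw [Multiset.count_cons_self, Multiset.count_cons_self, Multiset.count_cons_of_ne hne, c0 _ hnm]
    · rintro s (⟨h1, h2⟩ | ⟨u, rfl, h2, h3, h4⟩ | ⟨p, u, rfl, h2, h3, h4, h5, h6, h7, h8⟩)
      · simp at h2
      · rw [Multiset.cons_inj_right, Multiset.cons_inj_right] at h2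
        apply h3
        rw [← h2]; simp
      · have := congrArg (Multiset.count S) h2
        have hne : S ≠ p - R := by omega
        rw [Multiset.count_cons_self, Multiset.count_cons_self, Multiset.count_cons_self,
          Multiset.count_cons_of_ne hne, c0 _ h5] at this
        omega

theorem YR_exists {R S : ℕ} (hS : 1 ≤ S) (hSR : S < R) (h2S : 2 * S ≠ R) (s : Multiset ℕ)
    (hs0 : s ≠ 0) (hp : ∀ a ∈ s, 0 < a ∧ (a % R = S ∨ a % R = R - S)) (hc : S ∉ s) :
    ∃ t : Multiset ℕ, t.sum + R = s.sum + S ∧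
      (∀ a ∈ t, 0 < a ∧ (a % R = S ∨ a % R = R - S)) ∧ t.count S ≤ 2 ∧ YR R S s t := by
  have c0 : ∀ u : Multiset ℕ, S ∉ u → u.count S = 0 := fun u => Multiset.count_eq_zero_of_notMem
  have hSm : S % R = S := Nat.mod_eq_of_lt hSR
  by_cases h1 : R - S ∈ s
  · obtain ⟨u, rfl⟩ := Multiset.exists_cons_of_mem h1
    have hu : S ∉ u := fun h => hc (Multiset.mem_cons_of_mem h)
    refine ⟨u, ?_, fun a ha => hp a (Multiset.mem_cons_of_mem ha), by rw [c0 _ hu]; omega,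
      Or.inl ⟨rfl, c0 _ hu⟩⟩
    rw [Multiset.sum_cons]; omega
  by_cases h2 : R + S ∈ s
  · obtain ⟨u, rfl⟩ := Multiset.exists_cons_of_mem h2
    have hu : S ∉ u := fun h => hc (Multiset.mem_cons_of_mem h)
    refine ⟨S ::ₘ S ::ₘ u, ?_, ?_, by simp [c0 _ hu],
      Or.inr (Or.inl ⟨u, rfl, rfl, fun h => h1 (Multiset.mem_cons_of_mem h), hu⟩)⟩
    · simp only [Multiset.sum_cons]; omega
    · intro a ha
      simp only [Multiset.mem_cons] at ha
      rcases ha with rfl | rfl | h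
      · exact ⟨hS, Or.inl hSm⟩
      · exact ⟨hS, Or.inl hSm⟩
      · exact hp a (Multiset.mem_cons_of_mem h)
  obtain ⟨p, hpm, hmin⟩ : ∃ p ∈ s, ∀ x ∈ s, p ≤ x := by
    have hne : s.toFinset.Nonempty := by
      obtain ⟨a, ha⟩ := Multiset.exists_mem_of_ne_zero hs0
      exact ⟨a, Multiset.mem_toFinset.2 ha⟩
    obtain ⟨p, hp, h⟩ := Finset.exists_min_image s.toFinset id hne
    exact ⟨p, Multiset.mem_toFinset.1 hp, fun x hx => h x (Multiset.mem_toFinset.2 hx)⟩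
  obtain ⟨u, rfl⟩ := Multiset.exists_cons_of_mem hpm
  have hu : S ∉ u := fun h => hc (Multiset.mem_cons_of_mem h)
  have hpS : p ≠ S := by rintro rfl; simp at hc
  have hpRS : p ≠ R - S := by rintro rfl; simp at h1
  have hpRS' : p ≠ R + S := by rintro rfl; simp at h2
  obtain ⟨hp0, hpmod⟩ := hp p hpm
  have hlt : R < p := by
    rcases lt_trichotomy p R with h | h | h
    · rw [Nat.mod_eq_of_lt h] at hpmod; omega
    · rw [h, Nat.mod_self] at hpmod; omega
    · exact h
  have hmod : (p - R) % R = p % R := (Nat.mod_eq_sub_mod hlt.le).symm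
  have hne : S ≠ p - R := by omega
  refine ⟨S ::ₘ (p - R) ::ₘ u, ?_, ?_, by simp [c0 _ hu, Multiset.count_cons_of_ne hne],
    Or.inr (Or.inr ⟨p, u, rfl, rfl, hlt, hpRS', hu, fun h => h1 (Multiset.mem_cons_of_mem h),
      fun h => h2 (Multiset.mem_cons_of_mem h), fun x hx => hmin x (Multiset.mem_cons_of_mem hx)⟩)⟩
  · simp only [Multiset.sum_cons]; omega
  · intro a ha
    simp only [Multiset.mem_cons] at ha
    rcases ha with rfl | rfl | h
    · exact ⟨hS, Or.inl hSm⟩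
    · exact ⟨by omega, by rw [hmod]; exact hpmod⟩
    · exact hp a (Multiset.mem_cons_of_mem h)

theorem y_finite (P : Multiset ℕ → Prop) (N : ℤ) (h : ∀ s, P s → (s.sum : ℤ) = N ∧ ∀ a ∈ s, 0 < a) :
    Finite {s : Multiset ℕ // P s} := by
  refine Finite.of_injective (β := N.toNat.Partition)
    (fun s => ⟨s.1, fun {i} hi => (h s.1 s.2).2 i hi, by have := (h s.1 s.2).1; omega⟩) ?_
  intro s t hst
  exact Subtype.ext (congrArg Nat.Partition.parts hst)

/-- Case k = 2 of the truncated JTP conjecture: `y_{S,R,1}(n) − y_{S,R,0}(n) + ρ_R(n) ≥ 0`. -/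
theorem stmt1 (R S : ℕ) (hR : 2 ≤ R) (hS : 1 ≤ S) (hSR : S < R) (h2S : 2 * S ≠ R)
    (ρ : ℤ → ℤ)
    (hρ1 : ∀ i : ℤ, ρ ((R : ℤ) * (i * (3 * i - 1) / 2)) = (-1) ^ i.natAbs)
    (hρ2 : ∀ m : ℤ, (∀ i : ℤ, m ≠ (R : ℤ) * (i * (3 * i - 1) / 2)) → ρ m = 0)
    (n : ℤ) (hn : 0 ≤ n) :
    0 ≤ (y R S 1 n : ℤ) - (y R S 0 n : ℤ) + ρ n := by
  have hSm : S % R = S := Nat.mod_eq_of_lt hSR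
  have hRm : (R - S) % R = R - S := Nat.mod_eq_of_lt (by omega)
  have hρ0 : ρ 0 = 1 := by simpa using hρ1 0
  have hfin0 := y_finite (fun s => (s.sum : ℤ) = n - (((0 : ℕ) : ℤ) * (((0 : ℕ) : ℤ) + 1) * R / 2 - ((0 : ℕ) : ℤ) * S) ∧
    (∀ a ∈ s, 0 < a ∧ (a % R = S % R ∨ a % R = (R - S) % R)) ∧ s.count S ≤ 2 * 0) _
    (fun s hs => ⟨hs.1, fun a ha => (hs.2.1 a ha).1⟩)
  have hfin1 := y_finite (fun s => (s.sum : ℤ) = n - (((1 : ℕ) : ℤ) * (((1 : ℕ) : ℤ) + 1) * R / 2 - ((1 : ℕ) : ℤ) * S) ∧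
    (∀ a ∈ s, 0 < a ∧ (a % R = S % R ∨ a % R = (R - S) % R)) ∧ s.count S ≤ 2 * 1) _
    (fun s hs => ⟨hs.1, fun a ha => (hs.2.1 a ha).1⟩)
  have e1 : n - (((1 : ℕ) : ℤ) * (((1 : ℕ) : ℤ) + 1) * R / 2 - ((1 : ℕ) : ℤ) * S) = n - R + S := by
    push_cast; omega
  have e0 : n - (((0 : ℕ) : ℤ) * (((0 : ℕ) : ℤ) + 1) * R / 2 - ((0 : ℕ) : ℤ) * S) = n := by
    simp
  rcases hn.eq_or_lt with rfl | hpos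
  · have : y R S 0 0 ≤ 1 := by
      unfold y
      have : Subsingleton {s : Multiset ℕ // (s.sum : ℤ) = 0 - (((0 : ℕ) : ℤ) * (((0 : ℕ) : ℤ) + 1) * R / 2 - ((0 : ℕ) : ℤ) * S) ∧
        (∀ a ∈ s, 0 < a ∧ (a % R = S % R ∨ a % R = (R - S) % R)) ∧ s.count S ≤ 2 * 0} := by
        have hz : ∀ s : Multiset ℕ, (s.sum : ℤ) = 0 → (∀ a ∈ s, 0 < a) → s = 0 := by
          intro s hs h
          by_contra hne
          obtain ⟨a, ha⟩ := Multiset.exists_mem_of_ne_zero hne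
          have h1 := Multiset.le_sum_of_mem ha
          have h2 := h a ha
          omega
        constructor
        rintro ⟨s, hs, hs', -⟩ ⟨t, ht, ht', -⟩
        rw [e0] at hs ht
        apply Subtype.ext
        show s = t
        rw [hz s hs fun a ha => (hs' a ha).1, hz t ht fun a ha => (ht' a ha).1]
      exact Finite.card_le_one_iff_subsingleton.2 this
    rw [hρ0]; omega
  have key : ∀ s : {s : Multiset ℕ // (s.sum : ℤ) = n - (((0 : ℕ) : ℤ) * (((0 : ℕ) : ℤ) + 1) * R / 2 - ((0 : ℕ) : ℤ) * S) ∧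
        (∀ a ∈ s, 0 < a ∧ (a % R = S % R ∨ a % R = (R - S) % R)) ∧ s.count S ≤ 2 * 0},
      ∃ t : {s : Multiset ℕ // (s.sum : ℤ) = n - (((1 : ℕ) : ℤ) * (((1 : ℕ) : ℤ) + 1) * R / 2 - ((1 : ℕ) : ℤ) * S) ∧
        (∀ a ∈ s, 0 < a ∧ (a % R = S % R ∨ a % R = (R - S) % R)) ∧ s.count S ≤ 2 * 1},
        YR R S s.1 t.1 := by
    rintro ⟨s, hs, hp, hc⟩
    rw [e0] at hs
    rw [hSm, hRm] at hp
    obtain ⟨t, h1, h2, h3, h4⟩ := YR_exists hS hSR h2S s (by rintro rfl; simp at hs; omega) hp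
      (Multiset.count_eq_zero.1 (by omega))
    exact ⟨⟨t, by rw [e1]; omega, by rw [hSm, hRm]; exact h2, by omega⟩, h4⟩
  choose f hf using key
  have finj : Function.Injective f := by
    intro s s' h
    have h1 := hf s
    rw [h] at h1
    exact Subtype.ext (YR_inj hS hSR h1 (hf s'))
  have hle : y R S 0 n ≤ y R S 1 n := Nat.card_le_card_of_injective f finj
  by_cases hm : ∃ i : ℤ, n = (R : ℤ) * (i * (3 * i - 1) / 2)
  · obtain ⟨i, hi⟩ := hm
    have hρ : -1 ≤ ρ n := by
      rw [hi, hρ1]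
      rcases neg_one_pow_eq_or ℤ i.natAbs with h | h <;> rw [h] <;> norm_num
    have hmpos : 0 < i * (3 * i - 1) / 2 := by
      by_contra hcon
      have : (R : ℤ) * (i * (3 * i - 1) / 2) ≤ 0 :=
        mul_nonpos_of_nonneg_of_nonpos (by positivity) (by omega)
      omega
    obtain ⟨m, hm⟩ := Int.eq_ofNat_of_zero_le hmpos.le
    rw [hm] at hi hmpos
    obtain ⟨w, hw1, hw2, hw3, hw4⟩ := YR_extra hS hSR h2S m (by omega)
    have hlt : y R S 0 n < y R S 1 n := by
      refine lt_of_le_of_ne hle fun heq => ?_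
      have hb : Function.Bijective f := by
        rw [Nat.bijective_iff_injective_and_card]
        exact ⟨finj, heq⟩
      obtain ⟨s, hs⟩ := hb.2 ⟨w, by
        rw [e1, hi]
        have : ((w.sum + R : ℕ) : ℤ) = ((m * R + S : ℕ) : ℤ) := by rw [hw1]
        push_cast at this
        push_cast
        linarith, by
        intro a ha
        rw [hSm, hRm]
        rcases hw2 a ha with rfl | rfl | rfl
        · exact ⟨hS, Or.inl hSm⟩
        · exact ⟨by omega, Or.inr hRm⟩
        · exact ⟨by omega, Or.inl (by rw [Nat.add_mod_left, hSm])⟩, by omega⟩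
      have := hf s
      rw [hs] at this
      exact hw4 _ this
    omega
  · rw [hρ2 n (by simpa using hm)]
    omega
end

section
/- Let R and S be integers with R ≥ 2, 1 ≤ S < R and 2S ≠ R, and let n ≥ 0. Then y_{S,R,2}(n) − y_{S,R,1}(n) + y_{S,R,0}(n) − ρ_R(n) ≥ 0. (This is the case k = 3 of the truncated Jacobi Triple Product conjecture: the coefficient a_{S,R,3}(n) is non-negative.) -/
namespace TJ

def K (B : Set ℕ) (w : ℤ) : Set (Multiset ℕ) :=
  {m | (m.sum : ℤ) = w ∧ ∀ a ∈ m, 0 < a ∧ a ∈ B}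

lemma fin_aux (r m : ℕ) : {l : Multiset ℕ | l.card ≤ r ∧ l.sum ≤ m}.Finite := by
  apply (Set.finite_Iic (r • (Multiset.range (m+1)))).subset
  rintro l ⟨h1, h2⟩
  simp only [Set.mem_Iic]
  rw [Multiset.le_iff_count]
  intro a
  by_cases ha : a ∈ l
  · have h3 : a ≤ l.sum := Multiset.single_le_sum (by simp) a ha
    rw [Multiset.count_nsmul, Multiset.count_eq_one_of_mem (Multiset.nodup_range _)
      (by simp; omega)]
    have := Multiset.count_le_card a l
    omega
  · rw [Multiset.count_eq_zero_of_notMem ha]; exact Nat.zero_le _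

lemma card_le_sum' (l : Multiset ℕ) : (∀ a ∈ l, 0 < a) → l.card ≤ l.sum := by
  induction l using Multiset.induction with
  | empty => simp
  | cons a l ih =>
    intro h
    have h1 := ih (fun b hb => h b (by simp [hb]))
    have h2 := h a (by simp)
    simp; omega

lemma K_fin (B : Set ℕ) (w : ℤ) : (K B w).Finite := by
  apply (fin_aux w.toNat w.toNat).subset
  rintro l ⟨h1, h2⟩
  have := card_le_sum' l (fun a ha => (h2 a ha).1)
  simp only [Set.mem_ofPred_eq]
  omega

lemma K_rec (B : Set ℕ) (w : ℤ) (a c : ℕ) (ha : 0 < a) (haB : a ∈ B) :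
    (K B w).ncard = {m | m ∈ K B w ∧ m.count a ≤ c}.ncard
      + (K B (w - (c+1) * a)).ncard := by
  have e : K B w = {m | m ∈ K B w ∧ m.count a ≤ c} ∪
      (fun m => Multiset.replicate (c+1) a + m) '' (K B (w - (c+1) * a)) := by
    ext m
    simp only [Set.mem_union, Set.mem_ofPred_eq, Set.mem_image]
    constructor
    · intro hm
      by_cases hc : m.count a ≤ c
      · exact Or.inl ⟨hm, hc⟩
      · right
        have hle : Multiset.replicate (c+1) a ≤ m := by
          rw [← Multiset.le_count_iff_replicate_le]; omega
        obtain ⟨u, rfl⟩ := Multiset.le_iff_exists_add.1 hle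
        refine ⟨u, ⟨?_, ?_⟩, rfl⟩
        · have := hm.1
          simp at this
          push_cast at this ⊢
          linarith
        · intro b hb
          exact hm.2 b (by simp [hb])
    · rintro (h | ⟨u, hu, rfl⟩)
      · exact h.1
      · refine ⟨?_, ?_⟩
        · have := hu.1
          simp [this]
          ring
        · intro b hb
          rcases Multiset.mem_add.1 hb with hb | hb
          · rw [Multiset.eq_of_mem_replicate hb]; exact ⟨ha, haB⟩
          · exact hu.2 b hb
  conv_lhs => rw [e]
  rw [Set.ncard_union_eq _ ((K_fin B w).subset (fun m hm => hm.1)) ((K_fin _ _).image _),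
    Set.ncard_image_of_injective _ (fun u v h => by simpa using h)]
  rw [Set.disjoint_left]
  rintro m ⟨_, h⟩ ⟨u, hu, rfl⟩
  simp at h

lemma K_del (B : Set ℕ) (w : ℤ) (a : ℕ) (ha : 0 < a) (haB : a ∈ B) :
    (K B w).ncard = (K (B \ {a}) w).ncard + (K B (w - a)).ncard := by
  rw [K_rec B w a 0 ha haB]
  congr 2
  · ext m
    simp only [K, Set.mem_ofPred_eq, Set.mem_sdiff, Set.mem_singleton_iff,
      Nat.le_zero, Multiset.count_eq_zero]
    constructor
    · rintro ⟨⟨h1, h2⟩, h3⟩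
      exact ⟨h1, fun b hb => ⟨(h2 b hb).1, (h2 b hb).2, fun h => h3 (h ▸ hb)⟩⟩
    · rintro ⟨h1, h2⟩
      exact ⟨⟨h1, fun b hb => ⟨(h2 b hb).1, (h2 b hb).2.1⟩⟩, fun h => (h2 a h).2.2 rfl⟩
  · simp

def T (R r s : ℕ) (w : ℤ) : Set (Multiset ℕ × Multiset ℕ) :=
  {p | p.1.card = r ∧ p.2.card = s ∧ (R : ℤ) * ((p.1.sum : ℤ) + p.2.sum) = w}

lemma T_fin (R r s : ℕ) (hR : 2 ≤ R) (w : ℤ) : (T R r s w).Finite := by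
  apply ((fin_aux r w.toNat).prod (fin_aux s w.toNat)).subset
  rintro ⟨l, m⟩ ⟨h1, h2, h3⟩
  simp only at h1 h2 h3
  have : (l.sum : ℤ) + m.sum ≤ w := by
    rw [← h3]
    have : (0:ℤ) ≤ (l.sum : ℤ) + m.sum := by positivity
    have hR' : (2:ℤ) ≤ R := by exact_mod_cast hR
    nlinarith
  simp only [Set.mem_prod, Set.mem_ofPred_eq]
  omega

lemma exists_max (l : Multiset ℕ) (h : l ≠ 0) : ∃ M ∈ l, ∀ a ∈ l, a ≤ M := by
  obtain ⟨M, hM, h2⟩ := Finset.exists_max_image l.toFinset id (by simpa using h)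
  exact ⟨M, by simpa using hM, fun a ha => h2 a (by simpa using ha)⟩

open Classical in
noncomputable def up (l : Multiset ℕ) : Multiset ℕ :=
  if h : l ≠ 0 then
    ((exists_max l h).choose + 1) ::ₘ l.erase (exists_max l h).choose else 0

lemma up_spec (l : Multiset ℕ) (h : l ≠ 0) :
    ∃ M u, l = M ::ₘ u ∧ (∀ a ∈ u, a ≤ M) ∧ up l = (M+1) ::ₘ u := by
  have hs := (exists_max l h).choose_spec
  refine ⟨(exists_max l h).choose, l.erase (exists_max l h).choose,
    (Multiset.cons_erase hs.1).symm, fun a ha => hs.2 a (Multiset.mem_of_mem_erase ha), ?_⟩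
  simp [up, h]

lemma up_inj {l m : Multiset ℕ} (hl : l ≠ 0) (hm : m ≠ 0) (h : up l = up m) : l = m := by
  obtain ⟨M, u, rfl, h1, h2⟩ := up_spec l hl
  obtain ⟨M', u', rfl, h1', h2'⟩ := up_spec m hm
  rw [h2, h2'] at h
  have : M = M' := by
    have a1 : M + 1 ∈ (M'+1) ::ₘ u' := h ▸ Multiset.mem_cons_self _ _
    have a2 : M' + 1 ∈ (M+1) ::ₘ u := h ▸ Multiset.mem_cons_self _ _
    rw [Multiset.mem_cons] at a1 a2
    rcases a1 with a1 | a1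
    · omega
    · have := h1' _ a1
      rcases a2 with a2 | a2
      · omega
      · have := h1 _ a2
        omega
  subst this
  rw [Multiset.cons_inj_right] at h
  rw [h]

lemma up_card (l : Multiset ℕ) (h : l ≠ 0) : (up l).card = l.card := by
  obtain ⟨M, u, rfl, h1, h2⟩ := up_spec l h
  rw [h2]; simp

lemma up_sum (l : Multiset ℕ) (h : l ≠ 0) : (up l).sum = l.sum + 1 := by
  obtain ⟨M, u, rfl, h1, h2⟩ := up_spec l h
  rw [h2]; simp; omega

lemma up_ne (l : Multiset ℕ) (h : l ≠ 0) : up l ≠ {0} := by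
  intro h3
  have := up_sum l h
  rw [h3] at this
  simp at this

lemma T_swap (R r s : ℕ) (w : ℤ) : (T R r s w).ncard = (T R s r w).ncard := by
  rw [← Set.ncard_image_of_injective (T R r s w) Prod.swap_injective]
  congr 1
  ext ⟨l, m⟩
  simp only [T, Set.mem_image, Set.mem_ofPred_eq, Prod.exists, Prod.swap_prod_mk, Prod.mk.injEq]
  constructor
  · rintro ⟨a, b, ⟨h1, h2, h3⟩, rfl, rfl⟩
    exact ⟨h2, h1, by rw [← h3]; ring⟩
  · rintro ⟨h1, h2, h3⟩
    exact ⟨m, l, ⟨h2, h1, by rw [← h3]; ring⟩, rfl, rfl⟩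

lemma T_im (R r s : ℕ) (hr : 1 ≤ r) (w : ℤ) :
    Set.InjOn (fun p : Multiset ℕ × Multiset ℕ => (up p.1, p.2)) (T R r s (w - R)) ∧
    (fun p : Multiset ℕ × Multiset ℕ => (up p.1, p.2)) '' (T R r s (w - R)) ⊆ T R r s w := by
  have hne : ∀ p ∈ T R r s (w - R), p.1 ≠ 0 := by
    rintro p ⟨h1, _⟩ h0
    rw [h0] at h1
    simp at h1; omega
  constructor
  · intro p hp q hq h
    simp only [Prod.mk.injEq] at h
    exact Prod.ext (up_inj (hne p hp) (hne q hq) h.1) h.2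
  · rintro _ ⟨p, hp, rfl⟩
    have h0 := hne p hp
    obtain ⟨h1, h2, h3⟩ := hp
    refine ⟨by rw [← h1]; exact up_card _ h0, h2, ?_⟩
    simp only [up_sum _ h0]
    rw [Nat.cast_add, Nat.cast_one]
    linarith

lemma T_mono1 (R r s : ℕ) (hR : 2 ≤ R) (hr : 1 ≤ r) (w : ℤ) :
    (T R r s (w - R)).ncard ≤ (T R r s w).ncard := by
  obtain ⟨h1, h2⟩ := T_im R r s hr w
  rw [← Set.InjOn.ncard_image h1]
  exact Set.ncard_le_ncard h2 (T_fin R r s hR w)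

lemma T_mono (R r s : ℕ) (hR : 2 ≤ R) (hr : 1 ≤ r + s) (w : ℤ) :
    (T R r s (w - R)).ncard ≤ (T R r s w).ncard := by
  by_cases h : 1 ≤ r
  · exact T_mono1 R r s hR h w
  · rw [T_swap R r s, T_swap R r s]
    exact T_mono1 R s r hR (by omega) w

lemma T_monoN (R r s : ℕ) (hR : 2 ≤ R) (hr : 1 ≤ r + s) (w : ℤ) (k : ℕ) :
    (T R r s (w - k * R)).ncard ≤ (T R r s w).ncard := by
  induction k with
  | zero => simp
  | succ k ih =>
    refine le_trans ?_ ih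
    have := T_mono R r s hR hr (w - k * R)
    rwa [show w - ((k + 1 : ℕ) : ℤ) * R = w - k * R - R by push_cast; ring]

lemma T_neg (R r s : ℕ) (w : ℤ) (hw : w < 0) : (T R r s w).ncard = 0 := by
  have : T R r s w = ∅ := by
    ext p
    simp only [Set.mem_empty_iff_false, iff_false]
    rintro ⟨_, _, h⟩
    have : (0:ℤ) ≤ (R : ℤ) * ((p.1.sum : ℤ) + p.2.sum) := by positivity
    omega
  rw [this]; simp

lemma T_zero_pos (R r s : ℕ) (hR : 2 ≤ R) : 1 ≤ (T R r s 0).ncard := by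
  rw [Nat.one_le_iff_ne_zero, Ne, Set.ncard_eq_zero (T_fin R r s hR 0)]
  intro h
  have : (Multiset.replicate r 0, Multiset.replicate s 0) ∈ T R r s 0 := by simp [T]
  rw [h] at this
  exact this

lemma T_delta (R r s : ℕ) (hR : 2 ≤ R) (hr : 1 ≤ r + s) (w : ℤ) :
    (T R r s (w - R)).ncard + (if w = 0 then 1 else 0) ≤ (T R r s w).ncard := by
  split_ifs with h
  · subst h
    rw [T_neg _ _ _ _ (by omega)]
    have := T_zero_pos R r s hR
    omega
  · exact T_mono R r s hR hr w

lemma T00 (R : ℕ) (w : ℤ) : (T R 0 0 w).ncard = if w = 0 then 1 else 0 := by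
  split_ifs with h
  · subst h
    have : T R 0 0 0 = {(0, 0)} := by
      ext ⟨l, m⟩
      simp only [T, Set.mem_ofPred_eq, Multiset.card_eq_zero, Set.mem_singleton_iff, Prod.mk.injEq]
      constructor
      · rintro ⟨h1, h2, _⟩; exact ⟨h1, h2⟩
      · rintro ⟨rfl, rfl⟩; simp
    rw [this]; simp
  · have : T R 0 0 w = ∅ := by
      ext ⟨l, m⟩
      simp only [T, Set.mem_ofPred_eq, Multiset.card_eq_zero, Set.mem_empty_iff_false, iff_false]
      rintro ⟨rfl, rfl, h3⟩
      simp at h3; omega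
    rw [this]; simp

lemma T10_le (R : ℕ) (hR : 2 ≤ R) (w : ℤ) :
    (T R 1 0 w).ncard ≤ (T R 1 0 (w - R)).ncard + (if w = 0 then 1 else 0) := by
  have h1 : (T R 1 0 w).ncard ≤ 1 := by
    rw [Set.ncard_le_one (T_fin R 1 0 hR w)]
    rintro ⟨l, m⟩ ⟨h1, h2, h3⟩ ⟨l', m'⟩ ⟨h1', h2', h3'⟩
    simp only [Multiset.card_eq_zero] at h2 h2'
    obtain ⟨a, rfl⟩ := Multiset.card_eq_one.1 h1
    obtain ⟨b, rfl⟩ := Multiset.card_eq_one.1 h1'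
    subst h2 h2'
    simp at h3 h3'
    have : (R:ℤ) ≠ 0 := by positivity
    have h4 : (a:ℤ) = b := mul_left_cancel₀ this (h3.trans h3'.symm)
    have h5 : a = b := by exact_mod_cast h4
    rw [h5]
  by_cases h0 : w = 0
  · simp [h0]; rw [h0] at h1; omega
  · simp only [h0, if_false, add_zero]
    by_cases he : T R 1 0 w = ∅
    · rw [he]; simp
    · obtain ⟨⟨l, m⟩, h1', h2, h3⟩ := Set.nonempty_iff_ne_empty.2 he
      simp only [Multiset.card_eq_zero] at h2
      obtain ⟨a, rfl⟩ := Multiset.card_eq_one.1 h1'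
      subst h2
      simp at h3
      have ha : 1 ≤ a := by
        rcases Nat.eq_zero_or_pos a with rfl | h
        · simp at h3; omega
        · exact h
      refine h1.trans ?_
      rw [Nat.one_le_iff_ne_zero, Ne, Set.ncard_eq_zero (T_fin R 1 0 hR _)]
      intro h
      have : (({a - 1}, 0) : Multiset ℕ × Multiset ℕ) ∈ T R 1 0 (w - R) := by
        refine ⟨by simp, by simp, ?_⟩
        simp [Nat.cast_sub ha]
        rw [← h3]; ring
      rw [h] at this
      exact this

lemma T11 (R : ℕ) (hR : 2 ≤ R) (m : ℕ) :
    (T R 1 1 ((R:ℤ) * m - R)).ncard + 1 ≤ (T R 1 1 ((R:ℤ) * m)).ncard := by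
  obtain ⟨h1, h2⟩ := T_im R 1 1 le_rfl ((R:ℤ) * m)
  have hn : (({0}, {m}) : Multiset ℕ × Multiset ℕ) ∉
      (fun p : Multiset ℕ × Multiset ℕ => (up p.1, p.2)) '' (T R 1 1 ((R:ℤ) * m - R)) := by
    rintro ⟨p, hp, h⟩
    simp only [Prod.mk.injEq] at h
    refine up_ne p.1 ?_ h.1
    intro h0
    have := hp.1
    rw [h0] at this
    simp at this
  rw [← Set.InjOn.ncard_image h1,
    ← Set.ncard_insert_of_notMem hn ((T_fin R 1 1 hR _).image _)]
  apply Set.ncard_le_ncard _ (T_fin R 1 1 hR _)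
  apply Set.insert_subset _ h2
  refine ⟨by simp, by simp, by simp⟩

def Bk (R S k : ℕ) : Set ℕ := {a | ∃ j, a = S + (k + j) * R ∨ a + S = (k + j) * R}

def phi (R S k : ℕ) (p : Multiset ℕ × Multiset ℕ) : Multiset ℕ :=
  p.1.map (fun j => S + (k + j) * R) + p.2.map (fun j => (k + j) * R - S)

lemma g_eq (R S k j : ℕ) (hk : 1 ≤ k) (hSR : S < R) :
    ∃ i, (k + j) = i + 1 ∧ (k + j) * R - S = (R - S) + R * i := by
  refine ⟨k + j - 1, by omega, ?_⟩
  obtain ⟨i, hi⟩ : ∃ i, k + j = i + 1 := ⟨k + j - 1, by omega⟩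
  rw [hi]
  have : (i + 1) * R = R * i + R := by ring
  rw [this]
  simp
  omega

lemma phi_filter (R S k : ℕ) (hk : 1 ≤ k) (hS : 1 ≤ S) (hSR : S < R) (h2S : 2 * S ≠ R)
    (p : Multiset ℕ × Multiset ℕ) :
    (phi R S k p).filter (fun a => a % R = S) = p.1.map (fun j => S + (k + j) * R) ∧
    (phi R S k p).filter (fun a => ¬ a % R = S) = p.2.map (fun j => (k + j) * R - S) := by
  have h1 : ∀ a ∈ p.1.map (fun j => S + (k + j) * R), a % R = S := by
    intro a ha
    obtain ⟨j, _, rfl⟩ := Multiset.mem_map.1 ha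
    simp [Nat.mod_eq_of_lt hSR]
  have h2 : ∀ a ∈ p.2.map (fun j => (k + j) * R - S), ¬ a % R = S := by
    intro a ha
    obtain ⟨j, _, rfl⟩ := Multiset.mem_map.1 ha
    obtain ⟨i, _, hi⟩ := g_eq R S k j hk hSR
    rw [hi, Nat.add_mul_mod_self_left, Nat.mod_eq_of_lt (by omega)]
    omega
  unfold phi
  rw [Multiset.filter_add, Multiset.filter_add]
  rw [Multiset.filter_eq_self.2 h1, Multiset.filter_eq_nil.2 h2, Multiset.filter_eq_self.2 h2,
    Multiset.filter_eq_nil.2 (fun a ha => not_not.2 (h1 a ha))]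
  simp

lemma phi_inj (R S k : ℕ) (hk : 1 ≤ k) (hS : 1 ≤ S) (hSR : S < R) (h2S : 2 * S ≠ R) :
    Function.Injective (phi R S k) := by
  intro p q h
  obtain ⟨h1, h2⟩ := phi_filter R S k hk hS hSR h2S p
  obtain ⟨h3, h4⟩ := phi_filter R S k hk hS hSR h2S q
  rw [h] at h1 h2
  have hR : 0 < R := by omega
  have i1 : Function.Injective (fun j => S + (k + j) * R) := by
    intro a b hab
    simp only at hab
    have := Nat.eq_of_mul_eq_mul_right hR (Nat.add_left_cancel hab)
    omega
  have i2 : Function.Injective (fun j => (k + j) * R - S) := by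
    intro a b hab
    simp only at hab
    obtain ⟨i, hi, e⟩ := g_eq R S k a hk hSR
    obtain ⟨i', hi', e'⟩ := g_eq R S k b hk hSR
    rw [e, e'] at hab
    have := Nat.eq_of_mul_eq_mul_left hR (Nat.add_left_cancel hab)
    omega
  exact Prod.ext (Multiset.map_injective i1 (h1.symm.trans h3))
    (Multiset.map_injective i2 (h2.symm.trans h4))

lemma phi_sum (R S k : ℕ) (hk : 1 ≤ k) (hSR : S < R) (p : Multiset ℕ × Multiset ℕ) :
    ((phi R S k p).sum : ℤ) = p.1.card * ((k:ℤ) * R + S) + p.2.card * ((k:ℤ) * R - S)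
      + (R : ℤ) * ((p.1.sum : ℤ) + p.2.sum) := by
  obtain ⟨l, m⟩ := p
  unfold phi
  simp only [Multiset.sum_add]
  have h1 : ((l.map (fun j => S + (k + j) * R)).sum : ℤ) =
      l.card * ((k:ℤ) * R + S) + R * l.sum := by
    induction l using Multiset.induction with
    | empty => simp
    | cons a l ih =>
      rw [Multiset.map_cons, Multiset.sum_cons, Multiset.sum_cons, Multiset.card_cons]
      push_cast at ih ⊢
      rw [ih]; ring
  have h2 : ((m.map (fun j => (k + j) * R - S)).sum : ℤ) =
      m.card * ((k:ℤ) * R - S) + R * m.sum := by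
    induction m using Multiset.induction with
    | empty => simp
    | cons a l ih =>
      rw [Multiset.map_cons, Multiset.sum_cons, Multiset.sum_cons, Multiset.card_cons]
      have : S ≤ (k + a) * R := by nlinarith
      push_cast [Nat.cast_sub this] at ih ⊢
      rw [ih]; ring
  push_cast at h1 h2 ⊢
  rw [h1, h2]; ring

lemma phi_mem (R S k : ℕ) (hk : 1 ≤ k) (hS : 1 ≤ S) (hSR : S < R)
    (p : Multiset ℕ × Multiset ℕ) : ∀ a ∈ phi R S k p, 0 < a ∧ a ∈ Bk R S k := by
  intro a ha
  rcases Multiset.mem_add.1 ha with ha | ha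
  · obtain ⟨j, _, rfl⟩ := Multiset.mem_map.1 ha
    exact ⟨by omega, j, Or.inl rfl⟩
  · obtain ⟨j, _, rfl⟩ := Multiset.mem_map.1 ha
    have : S < (k + j) * R := by nlinarith
    exact ⟨by omega, j, Or.inr (by omega)⟩

lemma phi_surj (R S k : ℕ) (l : Multiset ℕ) :
    (∀ a ∈ l, a ∈ Bk R S k) → ∃ p, phi R S k p = l := by
  induction l using Multiset.induction with
  | empty => intro _; exact ⟨(0, 0), by simp [phi]⟩
  | cons a l ih =>
    intro h
    obtain ⟨p, hp⟩ := ih (fun b hb => h b (by simp [hb]))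
    obtain ⟨j, hj | hj⟩ := h a (by simp)
    · exact ⟨(j ::ₘ p.1, p.2), by rw [← hp, hj]; simp [phi]⟩
    · refine ⟨(p.1, j ::ₘ p.2), ?_⟩
      rw [← hp, show a = (k + j) * R - S by omega]; simp [phi]

lemma K_sum (R S k : ℕ) (hk : 1 ≤ k) (hS : 1 ≤ S) (hSR : S < R) (h2S : 2 * S ≠ R)
    (N : ℕ) (w : ℤ) (hw : w < N) :
    (K (Bk R S k) w).ncard = ∑ p ∈ Finset.range N ×ˢ Finset.range N,
      (T R p.1 p.2 (w - p.1 * ((k:ℤ) * R + S) - p.2 * ((k:ℤ) * R - S))).ncard := by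
  classical
  have hR : 2 ≤ R := by omega
  set V : Set (Multiset ℕ × Multiset ℕ) := {p | ((phi R S k p).sum : ℤ) = w} with hV
  have e : K (Bk R S k) w = phi R S k '' V := by
    ext l
    constructor
    · rintro ⟨h1, h2⟩
      obtain ⟨p, rfl⟩ := phi_surj R S k l (fun a ha => (h2 a ha).2)
      exact ⟨p, h1, rfl⟩
    · rintro ⟨p, hp, rfl⟩
      exact ⟨hp, phi_mem R S k hk hS hSR p⟩
  have inj := phi_inj R S k hk hS hSR h2S
  have Vf : V.Finite := by
    refine Set.Finite.of_finite_image ?_ inj.injOn (f := phi R S k)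
    rw [← e]; exact K_fin _ _
  rw [e, Set.ncard_image_of_injective _ inj, Set.ncard_eq_toFinset_card V Vf]
  rw [Finset.card_eq_sum_card_fiberwise (f := fun p => (p.1.card, p.2.card))
    (t := Finset.range N ×ˢ Finset.range N)]
  · apply Finset.sum_congr rfl
    rintro ⟨r, s⟩ _
    rw [← Set.ncard_coe_finset]
    congr 1
    ext p
    have := phi_sum R S k hk hSR p
    simp only [Finset.coe_filter, Set.Finite.mem_toFinset, hV, Set.mem_ofPred_eq, T, Prod.mk.injEq]
    rw [this]
    constructor
    · rintro ⟨h1, rfl, rfl⟩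
      exact ⟨rfl, rfl, by linarith⟩
    · rintro ⟨rfl, rfl, h1⟩
      exact ⟨by linarith, rfl, rfl⟩
  · intro p hp
    have hp' : ((phi R S k p).sum : ℤ) = w := (Set.Finite.mem_toFinset Vf).1 hp
    have h3 := card_le_sum' _ (fun a ha => (phi_mem R S k hk hS hSR p a ha).1)
    have h4 : (phi R S k p).card = p.1.card + p.2.card := by simp [phi]
    simp only [Finset.coe_product, Finset.coe_range, Set.mem_prod, Set.mem_Iio]
    omega

end TJ

namespace TJ

def A (R S : ℕ) : Set ℕ := {a | a % R = S % R ∨ a % R = (R - S) % R}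

lemma A_eq (R S : ℕ) (hS : 1 ≤ S) (hSR : S < R) (h2S : 2 * S ≠ R) :
    A R S \ {S} = Bk R S 1 := by
  ext a
  simp only [A, Bk, Set.mem_sdiff, Set.mem_ofPred_eq, Set.mem_singleton_iff]
  rw [Nat.mod_eq_of_lt hSR, Nat.mod_eq_of_lt (show R - S < R by omega)]
  have hd := Nat.mod_add_div a R
  constructor
  · rintro ⟨h | h, h1⟩
    · have : a / R ≠ 0 := by
        intro h0; rw [h0] at hd; simp at hd; omega
      refine ⟨a / R - 1, Or.inl ?_⟩
      have h5 : 1 + (a / R - 1) = a / R := by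
        have := Nat.pos_of_ne_zero this
        exact Nat.add_sub_cancel' this
      rw [h5, mul_comm, ← h]; exact hd.symm
    · refine ⟨a / R, Or.inr ?_⟩
      rw [add_mul, mul_comm (a / R)]; omega
  · rintro ⟨j, h | h⟩
    · refine ⟨Or.inl ?_, ?_⟩
      · rw [h, Nat.add_mul_mod_self_right, Nat.mod_eq_of_lt hSR]
      · have : (1 + j) * R = R + j * R := by ring
        omega
    · have e : a = (R - S) + j * R := by
        have : (1 + j) * R = R + j * R := by ring
        omega
      refine ⟨Or.inr ?_, ?_⟩
      · rw [e, Nat.add_mul_mod_self_right, Nat.mod_eq_of_lt (by omega)]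
      · intro h3
        have h4 : j = 0 ∨ 1 ≤ j := by omega
        rcases h4 with rfl | h4
        · omega
        · have : R ≤ j * R := by nlinarith
          omega

lemma B_eq (R S : ℕ) (hS : 1 ≤ S) (hSR : S < R) (h2S : 2 * S ≠ R) :
    (Bk R S 1 \ {R + S}) \ {R - S} = Bk R S 2 := by
  ext a
  simp only [Bk, Set.mem_sdiff, Set.mem_ofPred_eq, Set.mem_singleton_iff]
  constructor
  · rintro ⟨⟨⟨j, h⟩, h1⟩, h2⟩
    have hj : j ≠ 0 := by
      rintro rfl
      simp at h
      omega
    refine ⟨j - 1, ?_⟩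
    rwa [show 2 + (j - 1) = 1 + j by omega]
  · rintro ⟨j, h⟩
    have e : (2 + j) * R = 2 * R + j * R := by ring
    rw [e] at h
    refine ⟨⟨⟨j + 1, ?_⟩, ?_⟩, ?_⟩
    · rw [show 1 + (j + 1) = 2 + j by omega, e]; exact h
    · intro h1
      rcases h with h | h
      · omega
      · rcases Nat.eq_zero_or_pos j with rfl | hj
        · omega
        · have : R ≤ j * R := by nlinarith
          omega
    · omega

lemma y_eq (R S k : ℕ) (hS : 1 ≤ S) (n : ℤ) :
    ((K (A R S) (n - ((k : ℤ) * (k + 1) * R / 2 - k * S))).ncard : ℤ) =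
    y R S k n + (K (A R S) (n - ((k : ℤ) * (k + 1) * R / 2 - k * S) - (2 * k + 1) * S)).ncard := by
  have := K_rec (A R S) (n - ((k : ℤ) * (k + 1) * R / 2 - k * S)) S (2 * k) hS (by simp [A])
  rw [this]
  push_cast
  congr 2
  unfold y
  rw [← Nat.card_coe_set_eq]
  apply Nat.card_congr
  apply Equiv.subtypeEquivRight
  intro m
  simp only [K, A, Set.mem_ofPred_eq, and_assoc]

open Classical in
lemma rho_le (R : ℕ) (hR : 2 ≤ R) (ρ : ℤ → ℤ)
    (hρ1 : ∀ i : ℤ, ρ ((R : ℤ) * (i * (3 * i - 1) / 2)) = (-1) ^ i.natAbs)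
    (hρ2 : ∀ m : ℤ, (∀ i : ℤ, m ≠ (R : ℤ) * (i * (3 * i - 1) / 2)) → ρ m = 0) (n : ℤ) :
    ρ n ≤ (if n = 0 then (1:ℤ) else 0) - (if n - R = 0 then (1:ℤ) else 0)
      - (if n - 2 * R = 0 then (1:ℤ) else 0) - (if n - 4 * R = 0 then (1:ℤ) else 0)
      + (if ∃ m : ℕ, n - 4 * R = R * m then (1:ℤ) else 0) := by
  have hRp : (2:ℤ) ≤ R := by exact_mod_cast hR
  by_cases hi : ∃ i : ℤ, n = (R : ℤ) * (i * (3 * i - 1) / 2)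
  · obtain ⟨i, hi⟩ := hi
    have hv := hρ1 i
    rw [← hi] at hv
    have c : i = 0 ∨ i = 1 ∨ i = -1 ∨ 5 ≤ i * (3 * i - 1) / 2 := by
      by_cases h : i = 0 ∨ i = 1 ∨ i = -1
      · tauto
      · right; right; right
        have : 10 ≤ i * (3 * i - 1) := by
          have : 2 ≤ i ∨ i ≤ -2 := by omega
          rcases this with h | h <;> nlinarith
        omega
    rcases c with rfl | rfl | rfl | c
    · simp at hi hv
      subst hi
      rw [hv, if_pos rfl, if_neg (by omega), if_neg (by omega), if_neg (by omega)]
      split_ifs <;> norm_num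
    · norm_num at hi hv
      subst hi
      rw [hv, if_neg (by omega), if_pos (by omega), if_neg (by omega), if_neg (by omega)]
      split_ifs <;> norm_num
    · norm_num at hi hv
      subst hi
      rw [hv, if_neg (by omega), if_neg (by omega), if_pos (by omega), if_neg (by omega)]
      split_ifs <;> norm_num
    · have h5 : 5 * (R:ℤ) ≤ n := by rw [hi]; nlinarith
      have hle : ρ n ≤ 1 := by
        rw [hv]
        rcases neg_one_pow_eq_or ℤ i.natAbs with h | h <;> rw [h] <;> norm_num
      rw [if_neg (by omega), if_neg (by omega), if_neg (by omega), if_neg (by omega),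
        if_pos]
      · linarith
      · refine ⟨(i * (3 * i - 1) / 2 - 4).toNat, ?_⟩
        rw [Int.toNat_of_nonneg (by omega), hi]; ring
  · push Not at hi
    rw [hρ2 n hi]
    have h0 := hi 0
    have h1 := hi 1
    have h2 := hi (-1)
    norm_num at h0 h1 h2
    rw [if_neg (by omega), if_neg (by omega), if_neg (by
      intro h; apply h2; linarith)]
    by_cases h4 : n - 4 * R = 0
    · rw [if_pos h4, if_pos ⟨0, by simpa using h4⟩]; norm_num
    · rw [if_neg h4]; split_ifs <;> norm_num

lemma small (r s : ℕ) (h : ¬ 2 ≤ r + s) :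
    (r = 0 ∧ s = 0) ∨ (r = 1 ∧ s = 0) ∨ (r = 0 ∧ s = 1) := by omega

end TJ

set_option maxHeartbeats 4000000 in
open TJ in
/-- Case k = 3 of the truncated JTP conjecture:
`y_{S,R,2}(n) − y_{S,R,1}(n) + y_{S,R,0}(n) − ρ_R(n) ≥ 0`. -/
theorem stmt2 (R S : ℕ) (hR : 2 ≤ R) (hS : 1 ≤ S) (hSR : S < R) (h2S : 2 * S ≠ R)
    (ρ : ℤ → ℤ)
    (hρ1 : ∀ i : ℤ, ρ ((R : ℤ) * (i * (3 * i - 1) / 2)) = (-1) ^ i.natAbs)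
    (hρ2 : ∀ m : ℤ, (∀ i : ℤ, m ≠ (R : ℤ) * (i * (3 * i - 1) / 2)) → ρ m = 0)
    (n : ℤ) (hn : 0 ≤ n) :
    0 ≤ (y R S 2 n : ℤ) - (y R S 1 n : ℤ) + (y R S 0 n : ℤ) - ρ n := by
  classical
  obtain ⟨P, hP⟩ : ∃ P : ℤ → ℤ, ∀ w, P w = (K (A R S) w).ncard := ⟨_, fun _ => rfl⟩
  obtain ⟨c1, hc1⟩ : ∃ c : ℤ → ℤ, ∀ w, c w = (K (Bk R S 1) w).ncard := ⟨_, fun _ => rfl⟩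
  obtain ⟨c2, hc2⟩ : ∃ c : ℤ → ℤ, ∀ w, c w = (K (Bk R S 2) w).ncard := ⟨_, fun _ => rfl⟩
  -- relations
  have r1 : ∀ w, P w = c1 w + P (w - S) := by
    intro w
    rw [hP, hP, hc1, K_del (A R S) w S hS (by simp [A]), A_eq R S hS hSR h2S]
    push_cast; ring
  have r2 : ∀ w, c1 w - c1 (w - R - S) - c1 (w - R + S) + c1 (w - 2 * R) = c2 w := by
    intro w
    have m1 : R + S ∈ Bk R S 1 := ⟨0, Or.inl (by ring)⟩
    have m2 : R - S ∈ Bk R S 1 \ {R + S} := ⟨⟨0, Or.inr (by omega)⟩, by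
      simp only [Set.mem_singleton_iff]; omega⟩
    have a1 := K_del (Bk R S 1) w (R + S) (by omega) m1
    have a2 := K_del (Bk R S 1) (w - (R - S : ℕ)) (R + S) (by omega) m1
    have a3 := K_del (Bk R S 1 \ {R + S}) w (R - S) (by omega) m2
    rw [B_eq R S hS hSR h2S] at a3
    simp only [hc1, hc2]
    rw [show w - ((R - S : ℕ) : ℤ) - ((R + S : ℕ) : ℤ) = w - 2 * R by
      push_cast [Nat.cast_sub hSR.le]; ring] at a2
    rw [show w - ((R - S : ℕ) : ℤ) = w - R + S by
      push_cast [Nat.cast_sub hSR.le]; ring] at a2 a3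
    rw [show w - ((R + S : ℕ) : ℤ) = w - R - S by push_cast; ring] at a1
    omega
  have y0 := y_eq R S 0 hS n
  have y1 := y_eq R S 1 hS n
  have y2 := y_eq R S 2 hS n
  simp only [← hP] at y0 y1 y2
  rw [show ((0:ℕ):ℤ) * (((0:ℕ):ℤ) + 1) * R / 2 = 0 by simp] at y0
  rw [show ((1:ℕ):ℤ) * (((1:ℕ):ℤ) + 1) * R / 2 = R by push_cast; omega] at y1
  rw [show ((2:ℕ):ℤ) * (((2:ℕ):ℤ) + 1) * R / 2 = 3 * R by push_cast; omega] at y2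
  have E0 : (y R S 0 n : ℤ) = c1 n := by
    have := r1 n
    simp at y0
    linarith
  have E1 : (y R S 1 n : ℤ) = c1 (n - R + S) + c1 (n - R) + c1 (n - R - S) := by
    have a := r1 (n - R + S)
    have b := r1 (n - R)
    have c := r1 (n - R - S)
    rw [show n - (R:ℤ) + S - S = n - R by ring] at a
    rw [show n - ((R:ℤ) - (1:ℕ) * S) - (2 * (1:ℕ) + 1) * S = n - R - S - S by push_cast; ring,
      show n - ((R:ℤ) - (1:ℕ) * S) = n - R + S by push_cast; ring] at y1
    linarith
  have E2 : (y R S 2 n : ℤ) = c1 (n - 3 * R + 2 * S) + c1 (n - 3 * R + S) + c1 (n - 3 * R)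
      + c1 (n - 3 * R - S) + c1 (n - 3 * R - 2 * S) := by
    have a := r1 (n - 3 * R + 2 * S)
    have b := r1 (n - 3 * R + S)
    have c := r1 (n - 3 * R)
    have d := r1 (n - 3 * R - S)
    have e := r1 (n - 3 * R - 2 * S)
    rw [show n - 3 * (R:ℤ) + 2 * S - S = n - 3 * R + S by ring] at a
    rw [show n - 3 * (R:ℤ) + S - S = n - 3 * R by ring] at b
    rw [show n - 3 * (R:ℤ) - S - S = n - 3 * R - 2 * S by ring] at d
    rw [show n - (3 * (R:ℤ) - (2:ℕ) * S) - (2 * (2:ℕ) + 1) * S = n - 3 * R - 2 * S - S by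
        push_cast; ring,
      show n - (3 * (R:ℤ) - (2:ℕ) * S) = n - 3 * R + 2 * S by push_cast; ring] at y2
    linarith
  have key : (y R S 2 n : ℤ) - (y R S 1 n : ℤ) + (y R S 0 n : ℤ) =
      c2 n - c2 (n - R) + (c1 (n - 4 * R + S) - c2 (n - 2 * R + S))
        + (c1 (n - 4 * R) - c2 (n - 2 * R)) + (c1 (n - 4 * R - S) - c2 (n - 2 * R - S)) := by
    rw [E0, E1, E2, ← r2, ← r2, ← r2, ← r2, ← r2]
    ring_nf
  clear y0 y1 y2 E0 E1 E2 r1 r2 hP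
  obtain ⟨N, hN⟩ : ∃ N : ℕ, N = n.toNat + 3 := ⟨_, rfl⟩
  obtain ⟨t, ht⟩ : ∃ t : ℕ → ℕ → ℤ → ℤ, ∀ r s w, t r s w = (T R r s w).ncard :=
    ⟨_, fun _ _ _ => rfl⟩
  have s1 : ∀ w ≤ n, c1 w = ∑ p ∈ Finset.range N ×ˢ Finset.range N,
      t p.1 p.2 (w - p.1 * ((R:ℤ) + S) - p.2 * ((R:ℤ) - S)) := by
    intro w hw
    rw [hc1, K_sum R S 1 le_rfl hS hSR h2S N w (by omega)]
    simp [ht]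
  have s2 : ∀ w ≤ n, c2 w = ∑ p ∈ Finset.range N ×ˢ Finset.range N,
      t p.1 p.2 (w - p.1 * (2 * (R:ℤ) + S) - p.2 * (2 * (R:ℤ) - S)) := by
    intro w hw
    rw [hc2, K_sum R S 2 (by norm_num) hS hSR h2S N w (by omega)]
    simp [ht]
  rw [key, s2 n le_rfl, s2 (n - R) (by omega), s2 (n - 2 * R) (by omega),
    s2 (n - 2 * R + S) (by omega), s2 (n - 2 * R - S) (by omega), s1 (n - 4 * R) (by omega),
    s1 (n - 4 * R + S) (by omega), s1 (n - 4 * R - S) (by omega)]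
  have hN3 : 3 ≤ N := by omega
  clear key s1 s2 hc1 hc2 hN
  simp only [← Finset.sum_sub_distrib, ← Finset.sum_add_distrib]
  obtain ⟨D, hD⟩ : ∃ D : ℕ × ℕ → ℤ, ∀ p, D p =
      t p.1 p.2 (n - p.1 * (2 * (R:ℤ) + S) - p.2 * (2 * (R:ℤ) - S))
      - t p.1 p.2 (n - p.1 * (2 * (R:ℤ) + S) - p.2 * (2 * (R:ℤ) - S) - R)
      + (t p.1 p.2 (n - 4 * R + S - p.1 * ((R:ℤ) + S) - p.2 * ((R:ℤ) - S))
        - t p.1 p.2 (n - 4 * R + S - p.1 * ((R:ℤ) + S) - p.2 * ((R:ℤ) - S)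
            - ((p.1:ℤ) + p.2 - 2) * R))
      + (t p.1 p.2 (n - 4 * R - p.1 * ((R:ℤ) + S) - p.2 * ((R:ℤ) - S))
        - t p.1 p.2 (n - 4 * R - p.1 * ((R:ℤ) + S) - p.2 * ((R:ℤ) - S)
            - ((p.1:ℤ) + p.2 - 2) * R))
      + (t p.1 p.2 (n - 4 * R - S - p.1 * ((R:ℤ) + S) - p.2 * ((R:ℤ) - S))
        - t p.1 p.2 (n - 4 * R - S - p.1 * ((R:ℤ) + S) - p.2 * ((R:ℤ) - S)
            - ((p.1:ℤ) + p.2 - 2) * R)) := ⟨_, fun _ => rfl⟩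
  have hsum : ∀ Z : ℤ, Z ≤ ∑ p ∈ Finset.range N ×ˢ Finset.range N, D p → ρ n ≤ Z → 
      0 ≤ ∑ p ∈ Finset.range N ×ˢ Finset.range N, D p - ρ n := by
    intro Z h1 h2; linarith
  -- monotonicity
  have mono : ∀ r s : ℕ, 2 ≤ r + s → ∀ w, 0 ≤ t r s w - t r s (w - ((r:ℤ) + s - 2) * R) := by
    intro r s h w
    have := T_monoN R r s hR (by omega) w (r + s - 2)
    rw [show ((r + s - 2 : ℕ) : ℤ) = (r:ℤ) + s - 2 by omega] at this
    rw [ht, ht]; omega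
  have mono1 : ∀ r s : ℕ, 1 ≤ r + s → ∀ w, (if w = 0 then (1:ℤ) else 0) ≤
      t r s w - t r s (w - R) := by
    intro r s h w
    have := T_delta R r s hR h w
    rw [ht, ht]
    split_ifs at this ⊢ <;> omega
  have t00 : ∀ w, t 0 0 w = if w = 0 then (1:ℤ) else 0 := by
    intro w
    rw [ht, T00]; split_ifs <;> simp
  have t10 : ∀ w : ℤ, - (if w + R = 0 then (1:ℤ) else 0) ≤ t 1 0 w - t 1 0 (w + R) := by
    intro w
    have := T10_le R hR (w + R)
    rw [ht, ht]
    rw [add_sub_cancel_right] at this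
    split_ifs at this ⊢ <;> omega
  have t01 : ∀ w : ℤ, - (if w + R = 0 then (1:ℤ) else 0) ≤ t 0 1 w - t 0 1 (w + R) := by
    intro w
    have := t10 w
    rw [ht, ht] at this ⊢
    rwa [T_swap R 0 1, T_swap R 0 1]
  have nonneg : ∀ p : ℕ × ℕ, 2 ≤ p.1 + p.2 → ∀ d : ℤ,
      d ≤ t p.1 p.2 (n - p.1 * (2 * (R:ℤ) + S) - p.2 * (2 * (R:ℤ) - S))
      - t p.1 p.2 (n - p.1 * (2 * (R:ℤ) + S) - p.2 * (2 * (R:ℤ) - S) - R) → d ≤ D p := by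
    intro p hp d hd
    rw [hD]
    have a1 := mono p.1 p.2 hp (n - 4 * R + S - p.1 * ((R:ℤ) + S) - p.2 * ((R:ℤ) - S))
    have a2 := mono p.1 p.2 hp (n - 4 * R - p.1 * ((R:ℤ) + S) - p.2 * ((R:ℤ) - S))
    have a3 := mono p.1 p.2 hp (n - 4 * R - S - p.1 * ((R:ℤ) + S) - p.2 * ((R:ℤ) - S))
    linarith
  have d00 : D (0, 0) = (if n = 0 then (1:ℤ) else 0) - (if n - R = 0 then (1:ℤ) else 0)
      + ((if n - 4 * R + S = 0 then (1:ℤ) else 0) - (if n - 2 * R + S = 0 then (1:ℤ) else 0))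
      + ((if n - 4 * R = 0 then (1:ℤ) else 0) - (if n - 2 * R = 0 then (1:ℤ) else 0))
      + ((if n - 4 * R - S = 0 then (1:ℤ) else 0)
        - (if n - 2 * R - S = 0 then (1:ℤ) else 0)) := by
    rw [hD]
    simp only [t00]
    push_cast
    ring_nf
  have d10 : (if n - 2 * R - S = 0 then (1:ℤ) else 0) - (if n - 4 * R = 0 then (1:ℤ) else 0)
      - (if n - 4 * R - S = 0 then (1:ℤ) else 0)
      - (if n - 4 * R - 2 * S = 0 then (1:ℤ) else 0) ≤ D (1, 0) := by
    rw [hD]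
    have a0 := mono1 1 0 (by norm_num) (n - 2 * R - S)
    have a1 := t10 (n - 4 * R - R)
    have a2 := t10 (n - 4 * R - S - R)
    have a3 := t10 (n - 4 * R - 2 * S - R)
    push_cast
    ring_nf at a0 a1 a2 a3 ⊢
    linarith
  have d01 : (if n - 2 * R + S = 0 then (1:ℤ) else 0) - (if n - 4 * R = 0 then (1:ℤ) else 0)
      - (if n - 4 * R + S = 0 then (1:ℤ) else 0)
      - (if n - 4 * R + 2 * S = 0 then (1:ℤ) else 0) ≤ D (0, 1) := by
    rw [hD]
    have a0 := mono1 0 1 (by norm_num) (n - 2 * R + S)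
    have a1 := t01 (n - 4 * R - R)
    have a2 := t01 (n - 4 * R + S - R)
    have a3 := t01 (n - 4 * R + 2 * S - R)
    push_cast
    ring_nf at a0 a1 a2 a3 ⊢
    linarith
  have d20 : (if n - 4 * R - 2 * S = 0 then (1:ℤ) else 0) ≤ D (2, 0) := by
    apply nonneg (2, 0) (by norm_num)
    have := mono1 2 0 (by norm_num) (n - 4 * R - 2 * S)
    push_cast
    ring_nf at this ⊢
    linarith
  have d02 : (if n - 4 * R + 2 * S = 0 then (1:ℤ) else 0) ≤ D (0, 2) := by
    apply nonneg (0, 2) (by norm_num)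
    have := mono1 0 2 (by norm_num) (n - 4 * R + 2 * S)
    push_cast
    ring_nf at this ⊢
    linarith
  have d11 : (if ∃ m : ℕ, n - 4 * R = R * m then (1:ℤ) else 0) ≤ D (1, 1) := by
    apply nonneg (1, 1) (by norm_num)
    have e : n - ((1:ℕ):ℤ) * (2 * (R:ℤ) + S) - ((1:ℕ):ℤ) * (2 * (R:ℤ) - S) = n - 4 * R := by
      push_cast; ring
    simp only [e]
    split_ifs with h
    · obtain ⟨m, hm⟩ := h
      have := T11 R hR m
      rw [hm, ht, ht]; omega
    · have := mono1 1 1 (by norm_num) (n - 4 * R)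
      split_ifs at this <;> omega
  have hsub : ∑ p ∈ ({(0,0), (1,0), (0,1), (1,1), (2,0), (0,2)} : Finset (ℕ × ℕ)), D p ≤
      ∑ p ∈ Finset.range N ×ˢ Finset.range N, D p := by
    apply Finset.sum_le_sum_of_subset_of_nonneg
    · intro p hp
      simp only [Finset.mem_insert, Finset.mem_singleton] at hp
      rcases hp with rfl | rfl | rfl | rfl | rfl | rfl <;>
        exact Finset.mem_product.2 ⟨Finset.mem_range.2 (lt_of_lt_of_le (by norm_num) hN3),
          Finset.mem_range.2 (lt_of_lt_of_le (by norm_num) hN3)⟩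
    · rintro ⟨r, s⟩ _ hp
      have h2 : 2 ≤ r + s := by
        by_contra hc
        apply hp
        rcases small r s hc with ⟨rfl, rfl⟩ | ⟨rfl, rfl⟩ | ⟨rfl, rfl⟩ <;> simp
      apply nonneg (r, s) h2
      have := mono1 r s (le_trans (by norm_num) h2) (n - r * (2 * (R:ℤ) + S) - s * (2 * (R:ℤ) - S))
      split_ifs at this <;> linarith
  rw [Finset.sum_insert (by simp), Finset.sum_insert (by simp), Finset.sum_insert (by simp),
    Finset.sum_insert (by simp), Finset.sum_insert (by simp), Finset.sum_singleton] at hsub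
  have hfin : 0 ≤ ∑ p ∈ Finset.range N ×ˢ Finset.range N, D p - ρ n := by
    apply hsum ((if n = 0 then (1:ℤ) else 0) - (if n - R = 0 then (1:ℤ) else 0)
      - (if n - 2 * R = 0 then (1:ℤ) else 0) - (if n - 4 * R = 0 then (1:ℤ) else 0)
      + (if ∃ m : ℕ, n - 4 * R = R * m then (1:ℤ) else 0))
    · linarith
    · exact rho_le R hR ρ hρ1 hρ2 n
  convert hfin using 2
  apply Finset.sum_congr rfl
  intro p _
  rw [hD]
  ring_nf
end

section
/- Let k ≥ 1 be an integer. Then for all integers n ≥ 0, (−1)^k · Σ_{j=−k}^{k} (−1)^j b_3(n − j(3j−1)/2) + (−1)^{k−1} ρ_3(n) ≥ 0. -/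
/-- `b3 m` is the number of 3-regular partitions of `m` (partitions with no part
divisible by 3), with `b3 m = 0` for `m < 0`. A partition is a multiset of positive parts. -/
noncomputable def b3 (m : ℤ) : ℕ :=
  Nat.card {s : Multiset ℕ // (s.sum : ℤ) = m ∧ ∀ a ∈ s, 0 < a ∧ ¬ 3 ∣ a}

def b3Equiv (m : ℕ) : {s : Multiset ℕ // (s.sum : ℤ) = (m : ℤ) ∧ ∀ a ∈ s, 0 < a ∧ ¬ 3 ∣ a} ≃
    {p : Nat.Partition m // p ∈ Nat.Partition.restricted m (¬ 3 ∣ ·)} where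
  toFun s := ⟨⟨s.1, fun {i} hi => (s.2.2 i hi).1, by exact_mod_cast s.2.1⟩, by
    simp only [Nat.Partition.restricted, Finset.mem_filter, Finset.mem_univ, true_and]
    exact fun i hi => (s.2.2 i hi).2⟩
  invFun p := ⟨p.1.parts, by exact_mod_cast p.1.parts_sum, fun a ha => ⟨p.1.parts_pos ha, by
    have := p.2
    simp only [Nat.Partition.restricted, Finset.mem_filter, Finset.mem_univ, true_and] at this
    exact this a ha⟩⟩
  left_inv s := rfl
  right_inv p := rfl

theorem b3_nat (m : ℕ) : b3 (m : ℤ) = (Nat.Partition.restricted m (¬ 3 ∣ ·)).card := by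
  rw [b3, Nat.card_congr (b3Equiv m), Nat.card_eq_fintype_card, Fintype.card_coe]

theorem b3_neg (m : ℤ) (hm : m < 0) : b3 m = 0 := by
  have : IsEmpty {s : Multiset ℕ // (s.sum : ℤ) = m ∧ ∀ a ∈ s, 0 < a ∧ ¬ 3 ∣ a} := by
    refine ⟨fun s => ?_⟩
    have := s.2.1
    omega
  rw [b3, Nat.card_of_isEmpty]

theorem b3_mono (m : ℤ) (a : ℕ) (ha : 0 < a) (h3 : ¬ 3 ∣ a) : b3 (m - a) ≤ b3 m := by
  rcases lt_or_ge m 0 with hm | hm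
  · rw [b3_neg (m - a) (by omega)]; exact Nat.zero_le _
  · lift m to ℕ using hm
    have : Finite {s : Multiset ℕ // (s.sum : ℤ) = (m : ℤ) ∧ ∀ a ∈ s, 0 < a ∧ ¬ 3 ∣ a} :=
      Finite.of_equiv _ (b3Equiv m).symm
    refine Nat.card_le_card_of_injective (fun s => ⟨a ::ₘ s.1, ?_, ?_⟩) ?_
    · have := s.2.1
      rw [Multiset.sum_cons, Nat.cast_add]; omega
    · intro b hb
      rcases Multiset.mem_cons.1 hb with rfl | hb
      · exact ⟨ha, h3⟩
      · exact s.2.2 b hb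
    · intro s t h
      have := congrArg Subtype.val h
      exact Subtype.ext ((Multiset.cons_inj_right a).1 this)

open PowerSeries PowerSeries.WithPiTopology in
theorem b3_gf : (PowerSeries.mk fun n : ℕ => ((b3 (n : ℤ) : ℕ) : ℤ)) * pentagonalSeries ℤ =
    expand 3 (by norm_num) (pentagonalSeries ℤ) := by
  have h0 : (PowerSeries.mk fun n : ℕ => ((b3 (n : ℤ) : ℕ) : ℤ)) =
      PowerSeries.mk fun n : ℕ => ((Nat.Partition.countRestricted n 3).card : ℤ) := by
    ext n
    simp only [coeff_mk]
    rw [b3_nat, Nat.Partition.card_restricted_eq_card_countRestricted n (by norm_num)]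
  rw [h0]
  have h1 := (Nat.Partition.hasProd_powerSeriesMk_card_countRestricted ℤ
    (m := 3) (by norm_num)).mul (hasProd_one_sub_X_pow ℤ)
  refine h1.unique ?_
  rw [HasProd, tendsto_iff_coeff_tendsto]
  intro d
  apply tendsto_nhds_of_eventually_eq
  have key : ∀ s : Finset ℕ, (∏ b ∈ s, ((∑ j ∈ Finset.range 3, (X : ℤ⟦X⟧) ^ ((b + 1) * j)) *
      (1 - X ^ (b + 1)))) = expand 3 (by norm_num) (∏ b ∈ s, (1 - X ^ (b + 1) : ℤ⟦X⟧)) := by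
    intro s
    rw [map_prod]
    refine Finset.prod_congr rfl fun b _ => ?_
    simp only [pow_mul, geom_sum_mul_neg, map_sub, map_one, map_pow, expand_X]
    ring
  have h2 := coeff_prod_one_sub_X_pow_eventually_eq ℤ (d / 3)
  filter_upwards [h2] with s hs
  rw [SummationFilter.unconditional] at *
  rw [key, coeff_expand, coeff_expand, hs]

theorem pent_gt (j : ℤ) (N K : ℕ) (hK : N ≤ K) (h : pentagonal j ≤ N) :
    j ∈ Finset.Icc (-(K : ℤ)) K := by
  have := two_mul_natCast_pentagonal j
  have h' : (pentagonal j : ℤ) ≤ K := by exact_mod_cast h.trans hK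
  rw [Finset.mem_Icc]
  constructor <;> nlinarith

theorem full_sum (N K : ℕ) (hK : N ≤ K) :
    ∑ j ∈ Finset.Icc (-(K : ℤ)) (K : ℤ),
      (-1 : ℤ) ^ j.natAbs * (b3 ((N : ℤ) - j * (3 * j - 1) / 2) : ℤ) =
    PowerSeries.coeff N (PowerSeries.expand 3 (by norm_num) (PowerSeries.pentagonalSeries ℤ)) := by
  rw [← b3_gf, PowerSeries.coeff_mul]
  have hs : ∀ j : ℤ, ((Int.negOnePow j : ℤˣ) : ℤ) = (-1) ^ j.natAbs := by
    intro j
    rcases Int.even_or_odd j with h | h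
    · rw [Int.negOnePow_even j h, (Int.natAbs_even.2 h).neg_one_pow]; rfl
    · rw [Int.negOnePow_odd j h, (Int.natAbs_odd.2 h).neg_one_pow]; rfl
  have hc : ∀ x ∈ Finset.HasAntidiagonal.antidiagonal N,
      (PowerSeries.pentagonalSeries ℤ).coeff x.2 =
      ∑ j ∈ Finset.Icc (-(K : ℤ)) (K : ℤ), if pentagonal j = x.2 then (-1 : ℤ) ^ j.natAbs else 0 := by
    intro x hx
    have hx' := Finset.HasAntidiagonal.mem_antidiagonal.1 hx
    by_cases h : x.2 ∈ Set.range pentagonal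
    · obtain ⟨i, hi⟩ := h
      rw [← hi, PowerSeries.coeff_pentagonalSeries_pentagonal]
      simp only [pentagonal_inj]
      rw [Finset.sum_ite_eq', if_pos (pent_gt i N K hK (by omega))]
      simpa using hs i
    · rw [PowerSeries.coeff_pentagonalSeries_eq_zero _ h]
      refine (Finset.sum_eq_zero fun j _ => if_neg fun hj => h ⟨j, hj⟩).symm
  symm
  refine (Finset.sum_congr rfl fun x hx =>
    (by rw [hc x hx, Finset.mul_sum])).trans (Finset.sum_comm.trans ?_)
  symm
  refine Finset.sum_congr rfl fun j _ => ?_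
  rw [← natCast_pentagonal]
  rcases le_or_gt (pentagonal j) N with h | h
  · rw [Finset.sum_eq_single (N - pentagonal j, pentagonal j)]
    · rw [if_pos rfl, PowerSeries.coeff_mk, Nat.cast_sub h, mul_comm]
    · intro x hx hne
      rw [if_neg, mul_zero]
      intro h'
      apply hne
      have := Finset.HasAntidiagonal.mem_antidiagonal.1 hx
      ext <;> simp <;> omega
    · intro hh
      exact absurd (Finset.HasAntidiagonal.mem_antidiagonal.2 (by simp; omega)) hh
  · rw [b3_neg _ (by omega), Finset.sum_eq_zero]
    · simp
    · intro x hx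
      have := Finset.HasAntidiagonal.mem_antidiagonal.1 hx
      rw [if_neg (by omega), mul_zero]

theorem Icc_step (f : ℤ → ℤ) (k : ℕ) :
    ∑ j ∈ Finset.Icc (-((k + 1 : ℕ) : ℤ)) ((k + 1 : ℕ) : ℤ), f j =
    ∑ j ∈ Finset.Icc (-(k : ℤ)) (k : ℤ), f j + f (k + 1) + f (-(k + 1)) := by
  have : Finset.Icc (-((k + 1 : ℕ) : ℤ)) ((k + 1 : ℕ) : ℤ) =
      insert (-((k : ℤ) + 1)) (insert ((k : ℤ) + 1) (Finset.Icc (-(k : ℤ)) (k : ℤ))) := by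
    ext x
    simp only [Finset.mem_insert, Finset.mem_Icc]
    push_cast
    omega
  rw [this, Finset.sum_insert, Finset.sum_insert]
  · ring
  · simp
  · simp only [Finset.mem_insert, Finset.mem_Icc]
    omega

theorem rho_eq (ρ : ℤ → ℤ)
    (hρ1 : ∀ i : ℤ, ρ (3 * (i * (3 * i - 1) / 2)) = (-1) ^ i.natAbs)
    (hρ2 : ∀ m : ℤ, (∀ i : ℤ, m ≠ 3 * (i * (3 * i - 1) / 2)) → ρ m = 0) (N : ℕ) :
    ρ N = PowerSeries.coeff N
      (PowerSeries.expand 3 (by norm_num) (PowerSeries.pentagonalSeries ℤ)) := by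
  have hs : ∀ j : ℤ, ((Int.negOnePow j : ℤˣ) : ℤ) = (-1) ^ j.natAbs := by
    intro j
    rcases Int.even_or_odd j with h | h
    · rw [Int.negOnePow_even j h, (Int.natAbs_even.2 h).neg_one_pow]; rfl
    · rw [Int.negOnePow_odd j h, (Int.natAbs_odd.2 h).neg_one_pow]; rfl
  by_cases h : ∃ i : ℤ, (N : ℤ) = 3 * (i * (3 * i - 1) / 2)
  · obtain ⟨i, hi⟩ := h
    rw [hi, hρ1]
    rw [← natCast_pentagonal] at hi
    have : N = 3 * pentagonal i := by exact_mod_cast hi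
    rw [this, PowerSeries.coeff_expand_mul, PowerSeries.coeff_pentagonalSeries_pentagonal]
    simpa using (hs i).symm
  · push Not at h
    rw [hρ2 _ h, PowerSeries.coeff_expand]
    split_ifs with hd
    · rw [PowerSeries.coeff_pentagonalSeries_eq_zero]
      rintro ⟨i, hi⟩
      apply h i
      rw [← natCast_pentagonal]
      omega
    · rfl

theorem pair_le (n : ℤ) (k : ℕ) :
    b3 (n - pentagonal ((k : ℤ) + 1 + 1)) + b3 (n - pentagonal (-((k : ℤ) + 1 + 1))) ≤
    b3 (n - pentagonal ((k : ℤ) + 1)) + b3 (n - pentagonal (-((k : ℤ) + 1))) := by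
  have h1 := b3_mono (n - pentagonal ((k : ℤ) + 1)) (3 * (k + 1) + 1) (by omega) (by omega)
  have h2 := b3_mono (n - pentagonal (-((k : ℤ) + 1))) (3 * (k + 1) + 2) (by omega) (by omega)
  have e1 : (pentagonal ((k : ℤ) + 1 + 1) : ℤ) =
      pentagonal ((k : ℤ) + 1) + ((3 * (k + 1) + 1 : ℕ) : ℤ) := by
    have a := two_mul_natCast_pentagonal ((k : ℤ) + 1 + 1)
    have b := two_mul_natCast_pentagonal ((k : ℤ) + 1)
    push_cast
    linarith
  have e2 : (pentagonal (-((k : ℤ) + 1 + 1)) : ℤ) =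
      pentagonal (-((k : ℤ) + 1)) + ((3 * (k + 1) + 2 : ℕ) : ℤ) := by
    have a := two_mul_natCast_pentagonal (-((k : ℤ) + 1 + 1))
    have b := two_mul_natCast_pentagonal (-((k : ℤ) + 1))
    push_cast
    linarith
  rw [e1, e2, ← sub_sub, ← sub_sub]
  exact add_le_add h1 h2

/-- For `k ≥ 1` and `n ≥ 0`,
`(−1)^k · Σ_{j=−k}^{k} (−1)^j b_3(n − j(3j−1)/2) + (−1)^{k−1} ρ_3(n) ≥ 0`. -/
theorem stmt3 (k : ℕ) (hk : 1 ≤ k)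
    (ρ : ℤ → ℤ)
    (hρ1 : ∀ i : ℤ, ρ (3 * (i * (3 * i - 1) / 2)) = (-1) ^ i.natAbs)
    (hρ2 : ∀ m : ℤ, (∀ i : ℤ, m ≠ 3 * (i * (3 * i - 1) / 2)) → ρ m = 0)
    (n : ℤ) (hn : 0 ≤ n) :
    0 ≤ (-1 : ℤ) ^ k *
          (∑ j ∈ Finset.Icc (-(k : ℤ)) (k : ℤ),
            (-1 : ℤ) ^ j.natAbs * (b3 (n - j * (3 * j - 1) / 2) : ℤ))
        + (-1 : ℤ) ^ (k - 1) * ρ n := by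
  lift n to ℕ using hn
  set f : ℤ → ℤ := fun j => (-1 : ℤ) ^ j.natAbs * (b3 ((n : ℤ) - j * (3 * j - 1) / 2) : ℤ) with hf
  set S : ℕ → ℤ := fun k => ∑ j ∈ Finset.Icc (-(k : ℤ)) (k : ℤ), f j with hS
  have hfull : ∀ K, n ≤ K → S K = ρ n := fun K hK => by
    rw [rho_eq ρ hρ1 hρ2 n]; exact full_sum n K hK
  have hstep : ∀ k : ℕ, S (k + 1) = S k + (-1) ^ (k + 1) *
      ((b3 (n - pentagonal ((k : ℤ) + 1)) : ℤ) + b3 (n - pentagonal (-((k : ℤ) + 1)))) := by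
    intro k
    have hn1 : ((k : ℤ) + 1).natAbs = k + 1 := by omega
    have hn2 : (-((k : ℤ) + 1)).natAbs = k + 1 := by omega
    simp only [hS]
    rw [Icc_step]
    simp only [hf]
    rw [hn1, hn2, natCast_pentagonal, natCast_pentagonal]
    ring
  have hdec : ∀ k : ℕ, (-1) ^ (k + 2) * (S (k + 2) - ρ n) ≤ (-1) ^ k * (S k - ρ n) := by
    intro k
    have h1 := hstep k
    have h2 := hstep (k + 1)
    have hp := pair_le n k
    push_cast at h2
    rw [show k + 2 = k + 1 + 1 from rfl, h2, h1]
    zify at hp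
    have hsq : ((-1 : ℤ) ^ k) * (-1) ^ k = 1 := by rw [← mul_pow]; simp
    simp only [pow_succ]
    generalize (-1 : ℤ) ^ k = e at *
    nlinarith
  have hall : ∀ m k : ℕ, (-1) ^ (k + 2 * m) * (S (k + 2 * m) - ρ n) ≤ (-1) ^ k * (S k - ρ n) := by
    intro m
    induction m with
    | zero => intro k; simp
    | succ m ih => intro k; exact (hdec (k + 2 * m)).trans (ih k)
  have h := hall n k
  rw [hfull (k + 2 * n) (by omega)] at h
  obtain ⟨k, rfl⟩ : ∃ l, k = l + 1 := ⟨k - 1, by omega⟩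
  have : (-1 : ℤ) ^ (k + 1) * S (k + 1) + (-1) ^ (k + 1 - 1) * ρ n =
      (-1) ^ (k + 1) * (S (k + 1) - ρ n) := by
    rw [Nat.add_sub_cancel, pow_succ]; ring
  change 0 ≤ (-1 : ℤ) ^ (k + 1) * S (k + 1) + (-1) ^ (k + 1 - 1) * ρ n
  rw [this]
  simpa using h
end

section
/- For every integer k ≥ 1 there exists an integer N_k such that for all n ≥ N_k the following holds: if k is odd, then Q(n − T_{2k−2}) + Σ_{i=0}^{(k−3)/2} ( Q(n − T_{4i}) + Q(n − T_{4i+3}) ) ≥ Σ_{i=0}^{(k−3)/2} ( Q(n − T_{4i+1}) + Q(n − T_{4i+2}) ); and if k is even, then Q(n − T_{2k−1}) + Σ_{i=0}^{(k−2)/2} ( Q(n − T_{4i+1}) + Q(n − T_{4i+2}) ) ≥ Σ_{i=0}^{(k−2)/2} ( Q(n − T_{4i}) + Q(n − T_{4i+3}) ). (Equivalently, the coefficient c_k(n) is non-negative for all sufficiently large n.) -/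
/-- `Q m` is the number of partitions of `m` into distinct parts, with `Q m = 0`
for `m < 0`. A partition is a multiset of positive parts. -/
noncomputable def Q (m : ℤ) : ℕ :=
  Nat.card {s : Multiset ℕ // (s.sum : ℤ) = m ∧ s.Nodup ∧ ∀ a ∈ s, 0 < a}

/-- The `j`-th triangular number. -/
noncomputable def T (j : ℕ) : ℕ := j * (j + 1) / 2

open Filter Topology in
theorem aux_growth (D C : ℕ) : ∃ M : ℕ, ∀ m ≥ M, D * (m + 1) ^ C ≤ 2 ^ m := by
  have h := tendsto_pow_const_div_const_pow_of_one_lt C (r := (2 : ℝ)) (by norm_num)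
  have h2 := (h.comp (tendsto_add_atTop_nat 1))
  have hpos : (0 : ℝ) < 1 / (2 * ((D : ℝ) + 1)) := by positivity
  have h3 := h2.eventually (gt_mem_nhds hpos)
  obtain ⟨M, hM⟩ := eventually_atTop.1 h3
  refine ⟨M, fun m hm => ?_⟩
  have h4 := hM m hm
  simp only [Function.comp] at h4
  rw [div_lt_div_iff₀ (by positivity) (by positivity)] at h4
  push_cast at h4
  rw [pow_succ] at h4
  have h5 : (0 : ℝ) ≤ ((m : ℝ) + 1) ^ C := by positivity
  have : (D : ℝ) * ((m : ℝ) + 1) ^ C ≤ 2 ^ m := by nlinarith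
  exact_mod_cast this

def PO (n : ℕ) : Finset (Multiset ℕ) := (Nat.Partition.odds n).image Nat.Partition.parts

def PD (n : ℕ) : Finset (Multiset ℕ) := (Nat.Partition.distincts n).image Nat.Partition.parts

theorem parts_inj (n : ℕ) : Function.Injective (Nat.Partition.parts (n := n)) := by
  intro a b h
  exact Nat.Partition.ext h

theorem mem_PO (n : ℕ) (s : Multiset ℕ) : s ∈ PO n ↔ s.sum = n ∧ ∀ a ∈ s, ¬ Even a := by
  simp only [PO, Finset.mem_image, Nat.Partition.odds, Nat.Partition.restricted, Finset.mem_filter,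
    Finset.mem_univ, true_and]
  constructor
  · rintro ⟨p, hp, rfl⟩
    exact ⟨p.parts_sum, hp⟩
  · rintro ⟨h1, h2⟩
    refine ⟨⟨s, ?_, h1⟩, h2, rfl⟩
    intro i hi
    rcases Nat.eq_zero_or_pos i with h | h
    · subst h; exact absurd (by simp) (h2 0 hi)
    · exact h

theorem mem_PD (n : ℕ) (s : Multiset ℕ) :
    s ∈ PD n ↔ s.sum = n ∧ s.Nodup ∧ ∀ a ∈ s, 0 < a := by
  simp only [PD, Finset.mem_image, Nat.Partition.distincts, Finset.mem_filter,
    Finset.mem_univ, true_and]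
  constructor
  · rintro ⟨p, hp, rfl⟩
    exact ⟨p.parts_sum, hp, fun a ha => p.parts_pos ha⟩
  · rintro ⟨h1, h2, h3⟩
    exact ⟨⟨s, fun {i} hi => h3 i hi, h1⟩, h2, rfl⟩

theorem card_PO_PD (n : ℕ) : (PO n).card = (PD n).card := by
  rw [PO, PD, Finset.card_image_of_injective _ (parts_inj n),
    Finset.card_image_of_injective _ (parts_inj n), Nat.Partition.card_odds_eq_card_distincts]

theorem Q_eq (n : ℕ) : Q (n : ℤ) = (PO n).card := by
  rw [card_PO_PD, Q]
  apply Nat.subtype_card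
  intro x
  rw [mem_PD]
  norm_cast

def PO' (n : ℕ) : Finset (Multiset ℕ) := (PO n).filter (fun s => 1 ∉ s)

theorem mem_PO' (n : ℕ) (s : Multiset ℕ) :
    s ∈ PO' n ↔ (s.sum = n ∧ ∀ a ∈ s, ¬ Even a) ∧ 1 ∉ s := by
  rw [PO', Finset.mem_filter, mem_PO]

theorem PO_rec (n : ℕ) : (PO (n + 1)).card = (PO n).card + (PO' (n + 1)).card := by
  rw [← Finset.card_filter_add_card_filter_not (s := PO (n+1)) (fun s => 1 ∈ s), PO']
  congr 1
  symm
  apply Finset.card_bij (fun s _ => 1 ::ₘ s)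
  · intro s hs
    rw [mem_PO] at hs
    rw [Finset.mem_filter, mem_PO]
    refine ⟨⟨by simp [hs.1, add_comm], ?_⟩, by simp⟩
    intro a ha
    rcases Multiset.mem_cons.1 ha with rfl | h
    · simp
    · exact hs.2 a h
  · intro a _ b _ h
    simpa using h
  · intro b hb
    rw [Finset.mem_filter, mem_PO] at hb
    have h1 := Multiset.cons_erase hb.2
    refine ⟨b.erase 1, ?_, h1⟩
    rw [mem_PO]
    refine ⟨?_, fun a ha => hb.1.2 a (Multiset.mem_of_mem_erase ha)⟩
    have := hb.1.1
    rw [← h1, Multiset.sum_cons] at this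
    omega

theorem sum_PO' (n : ℕ) : ∑ m ∈ Finset.range (n + 1), (PO' m).card ≤ (PO n).card := by
  induction n with
  | zero =>
    simp only [zero_add, Finset.range_one, Finset.sum_singleton]
    exact Finset.card_filter_le _ _
  | succ n ih =>
    rw [Finset.sum_range_succ, PO_rec]
    omega

theorem sum_sizes (n : ℕ) : ∑ s ∈ PO' n, s.toFinset.card ≤ (PO n).card := by
  refine le_trans ?_ (sum_PO' n)
  rw [← Finset.card_sigma]
  refine le_trans ?_ Finset.card_biUnion_le
  apply Finset.card_le_card_of_injOn (fun x => x.1.erase x.2)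
  · rintro ⟨s, a⟩ h
    simp only [Finset.coe_sigma, Set.mem_sigma_iff, Finset.mem_coe, Multiset.mem_toFinset,
      mem_PO'] at h
    obtain ⟨⟨⟨h1, h2⟩, h3⟩, h4⟩ := h
    have h5 := Multiset.cons_erase h4
    simp only [Finset.coe_biUnion, Set.mem_iUnion, Finset.mem_coe, mem_PO', Finset.mem_range]
    refine ⟨(s.erase a).sum, ?_, ⟨rfl, fun b hb => h2 b (Multiset.mem_of_mem_erase hb)⟩,
      fun hb => h3 (Multiset.mem_of_mem_erase hb)⟩
    rw [← h5, Multiset.sum_cons] at h1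
    omega
  · rintro ⟨s, a⟩ h ⟨t, b⟩ h' heq
    simp only [Finset.coe_sigma, Set.mem_sigma_iff, Finset.mem_coe, Multiset.mem_toFinset,
      mem_PO'] at h h' heq
    obtain ⟨⟨⟨h1, h2⟩, h3⟩, h4⟩ := h
    obtain ⟨⟨⟨h1', h2'⟩, h3'⟩, h4'⟩ := h'
    have h5 := Multiset.cons_erase h4
    have h5' := Multiset.cons_erase h4'
    have e1 : a + (s.erase a).sum = n := by rw [← Multiset.sum_cons, h5, h1]
    have e2 : b + (t.erase b).sum = n := by rw [← Multiset.sum_cons, h5', h1']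
    rw [heq] at e1
    have hab : a = b := by omega
    subst hab
    rw [heq, h5'] at h5
    rw [h5]

theorem small_count (n C : ℕ) :
    ((PO' n).filter (fun s => s.toFinset.card < C)).card ≤ C * (n + 1) ^ (2 * C) := by
  classical
  let G : Finset (ℕ × ℕ) := Finset.range (n + 1) ×ˢ Finset.range (n + 1)
  have hG : G.card = (n + 1) ^ 2 := by simp [G, sq]
  have h1 : ((PO' n).filter (fun s => s.toFinset.card < C)).card ≤
      ((Finset.range C).biUnion (fun i => G.powersetCard i)).card := by
    apply Finset.card_le_card_of_injOn (fun s => s.toFinset.image (fun a => (a, s.count a)))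
    · intro s hs
      simp only [Finset.coe_filter, Set.mem_ofPred_eq, mem_PO'] at hs
      obtain ⟨⟨⟨h1, h2⟩, h3⟩, h4⟩ := hs
      simp only [Finset.mem_coe, Finset.mem_biUnion, Finset.mem_range, Finset.mem_powersetCard]
      refine ⟨_, lt_of_le_of_lt Finset.card_image_le h4, ?_, rfl⟩
      intro x hx
      obtain ⟨a, ha, rfl⟩ := Finset.mem_image.1 hx
      rw [Multiset.mem_toFinset] at ha
      simp only [G, Finset.mem_product, Finset.mem_range]
      have hle := Multiset.le_sum_of_mem ha
      have hcard : s.card ≤ s.sum := by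
        have := Multiset.card_nsmul_le_sum (s := s) (a := 1) (fun x hx => by
          rcases Nat.eq_zero_or_pos x with h | h
          · subst h; exact absurd (by simp) (h2 0 hx)
          · exact h)
        simpa using this
      have := Multiset.count_le_card a s
      omega
    · intro s hs t ht heq
      simp only at heq
      have key : ∀ s t : Multiset ℕ, s.toFinset.image (fun a => (a, s.count a)) =
          t.toFinset.image (fun a => (a, t.count a)) → ∀ a ∈ s, s.count a = t.count a := by
        intro s t heq a ha
        have : (a, s.count a) ∈ t.toFinset.image (fun a => (a, t.count a)) := by
          rw [← heq]
          exact Finset.mem_image_of_mem _ (Multiset.mem_toFinset.2 ha)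
        obtain ⟨b, hb, hb2⟩ := Finset.mem_image.1 this
        simp only [Prod.mk.injEq] at hb2
        obtain ⟨rfl, h⟩ := hb2
        exact h.symm
      ext a
      by_cases ha : a ∈ s
      · exact key s t heq a ha
      · by_cases hb : a ∈ t
        · exact (key t s heq.symm a hb).symm
        · rw [Multiset.count_eq_zero_of_notMem ha, Multiset.count_eq_zero_of_notMem hb]
  refine h1.trans (Finset.card_biUnion_le.trans ?_)
  have : ∀ i ∈ Finset.range C, (G.powersetCard i).card ≤ (n + 1) ^ (2 * C) := by
    intro i hi
    rw [Finset.card_powersetCard, hG]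
    refine (Nat.choose_le_pow _ _).trans ?_
    rw [← pow_mul]
    apply Nat.pow_le_pow_right (by omega)
    have := Finset.mem_range.1 hi
    omega
  refine (Finset.sum_le_card_nsmul _ _ _ this).trans ?_
  simp

theorem lower (n m : ℕ) (hm : 4 ≤ m) (h : m ^ 2 ≤ n) : 2 ^ m ≤ (PO n).card := by
  classical
  rw [card_PO_PD]
  have hc : ((Finset.Icc 1 m).powerset).card = 2 ^ m := by simp
  rw [← hc]
  have hsum : ∀ S ∈ (Finset.Icc 1 m).powerset, m + ∑ i ∈ S, i < n := by
    intro S hS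
    rw [Finset.mem_powerset] at hS
    have h1 : ∑ i ∈ S, i ≤ ∑ i ∈ Finset.range (m + 1), i := by
      apply Finset.sum_le_sum_of_subset
      intro x hx
      have := Finset.mem_Icc.1 (hS hx)
      exact Finset.mem_range.2 (by omega)
    have h2 := Finset.sum_range_id_mul_two (m + 1)
    simp only [Nat.add_sub_cancel] at h2
    nlinarith
  apply Finset.card_le_card_of_injOn (fun S => (n - ∑ i ∈ S, i) ::ₘ S.val)
  · intro S hS
    have h1 := hsum S hS
    have hS' : S ⊆ Finset.Icc 1 m := Finset.mem_powerset.1 hS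
    rw [Finset.mem_coe, mem_PD]
    have hs : S.val.sum = ∑ i ∈ S, i := by simp
    refine ⟨?_, ?_, ?_⟩
    · rw [Multiset.sum_cons, hs]; omega
    · rw [Multiset.nodup_cons]
      refine ⟨fun hmem => ?_, S.nodup⟩
      have := Finset.mem_Icc.1 (hS' hmem)
      omega
    · intro a ha
      rcases Multiset.mem_cons.1 ha with rfl | ha
      · omega
      · exact (Finset.mem_Icc.1 (hS' ha)).1
  · have key : ∀ S ∈ (Finset.Icc 1 m).powerset,
        ∀ a, a ∈ S ↔ a ≤ m ∧ a ∈ (n - ∑ i ∈ S, i) ::ₘ S.val := by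
      intro S hS a
      have h1 := hsum S hS
      have hS' : S ⊆ Finset.Icc 1 m := Finset.mem_powerset.1 hS
      rw [Multiset.mem_cons, Finset.mem_val]
      constructor
      · intro ha
        exact ⟨(Finset.mem_Icc.1 (hS' ha)).2, Or.inr ha⟩
      · rintro ⟨h2, h3 | h3⟩
        · omega
        · exact h3
    intro S hS R hR heq
    ext a
    simp only at heq
    rw [key S hS, key R hR, heq]

theorem main_ineq (D : ℕ) : ∃ N : ℕ, ∀ n ≥ N, D * (PO' n).card ≤ (PO n).card := by
  obtain ⟨M, hM⟩ := aux_growth (2 * D * (2 * D)) (2 * (2 * (2 * D)))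
  refine ⟨(M + 4) ^ 2, fun n hn => ?_⟩
  set m := Nat.sqrt n with hm
  have hm4 : M + 4 ≤ m := by rw [hm, Nat.le_sqrt']; exact hn
  have hlow := lower n m (by omega) (Nat.sqrt_le' n)
  have hup : n + 1 ≤ (m + 1) ^ 2 := Nat.succ_le_succ_sqrt' n
  have hg := hM m (by omega)
  have hsm := small_count n (2 * D)
  have hsz := sum_sizes n
  have hsplit := Finset.card_filter_add_card_filter_not (s := PO' n)
    (fun s => s.toFinset.card < 2 * D)
  have hbig : ((PO' n).filter (fun s => ¬ s.toFinset.card < 2 * D)).card * (2 * D) ≤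
      (PO n).card := by
    refine le_trans ?_ hsz
    refine le_trans ?_ (Finset.sum_le_sum_of_subset (Finset.filter_subset
      (fun s => ¬ s.toFinset.card < 2 * D) _))
    rw [← smul_eq_mul]
    apply Finset.card_nsmul_le_sum
    intro s hs
    have := (Finset.mem_filter.1 hs).2
    omega
  have hpow : (n + 1) ^ (2 * (2 * D)) ≤ (m + 1) ^ (2 * (2 * (2 * D))) := by
    rw [pow_mul (m + 1) 2]
    exact Nat.pow_le_pow_left hup _
  have h1 : 2 * D * ((PO' n).filter (fun s => s.toFinset.card < 2 * D)).card ≤ (PO n).card := by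
    calc _ ≤ 2 * D * (2 * D * (n + 1) ^ (2 * (2 * D))) := Nat.mul_le_mul_left _ hsm
      _ ≤ 2 * D * (2 * D * (m + 1) ^ (2 * (2 * (2 * D)))) := by gcongr
      _ = 2 * D * (2 * D) * (m + 1) ^ (2 * (2 * (2 * D))) := by ring
      _ ≤ _ := hg.trans hlow
  rw [← hsplit]
  nlinarith

theorem PO_pos (n : ℕ) : 0 < (PO n).card := by
  apply Finset.card_pos.2
  refine ⟨Multiset.replicate n 1, ?_⟩
  rw [mem_PO]
  refine ⟨by simp, fun a ha => ?_⟩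
  rw [Multiset.eq_of_mem_replicate ha]; simp

open Filter Topology

theorem ratio_nat : Tendsto (fun n : ℕ => ((PO n).card : ℝ) / ((PO (n + 1)).card : ℝ))
    atTop (𝓝 1) := by
  rw [Metric.tendsto_atTop]
  intro ε hε
  obtain ⟨D, hD⟩ := exists_nat_gt (1 / ε)
  obtain ⟨N, hN⟩ := main_ineq D
  refine ⟨N, fun n hn => ?_⟩
  have h1 := hN (n + 1) (by omega)
  have h2 := PO_rec n
  have h3 : (0 : ℝ) < ((PO (n + 1)).card : ℝ) := by exact_mod_cast PO_pos (n + 1)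
  have h1' : (D : ℝ) * ((PO' (n + 1)).card : ℝ) ≤ ((PO (n + 1)).card : ℝ) := by exact_mod_cast h1
  have h2' : ((PO (n + 1)).card : ℝ) = ((PO n).card : ℝ) + ((PO' (n + 1)).card : ℝ) := by
    exact_mod_cast h2
  have h4 : ((PO n).card : ℝ) / ((PO (n + 1)).card : ℝ) - 1 =
      - (((PO' (n + 1)).card : ℝ) / ((PO (n + 1)).card : ℝ)) := by
    rw [← neg_div, div_sub_one h3.ne']
    congr 1
    linarith
  rw [Real.dist_eq, h4, abs_neg, abs_of_nonneg (div_nonneg (Nat.cast_nonneg _) h3.le), div_lt_iff₀ h3]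
  rw [div_lt_iff₀ hε] at hD
  have h5 : (0 : ℝ) < D := by
    by_contra hcon
    have : (D : ℝ) * ε ≤ 0 := mul_nonpos_of_nonpos_of_nonneg (not_lt.1 hcon) hε.le
    linarith
  have h6 : ((PO (n + 1)).card : ℝ) < D * (ε * ((PO (n + 1)).card : ℝ)) := by
    rw [← mul_assoc]
    exact lt_mul_of_one_lt_left h3 hD
  exact lt_of_mul_lt_mul_left (lt_of_le_of_lt h1' h6) h5.le

theorem ratio_one : Tendsto (fun n : ℤ => (Q (n - 1) : ℝ) / (Q n : ℝ)) atTop (𝓝 1) := by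
  have ht : Tendsto (fun n : ℤ => (n - 1).toNat) atTop atTop := by
    rw [tendsto_atTop]
    intro b
    filter_upwards [eventually_ge_atTop ((b : ℤ) + 1)] with n hn
    omega
  refine (ratio_nat.comp ht).congr' ?_
  filter_upwards [eventually_ge_atTop (1 : ℤ)] with n hn
  obtain ⟨m, rfl⟩ : ∃ m : ℕ, n = (m : ℤ) + 1 := ⟨(n - 1).toNat, by omega⟩
  have e : (m : ℤ) + 1 = ((m + 1 : ℕ) : ℤ) := by push_cast; rfl
  simp only [Function.comp, add_sub_cancel_right, Int.toNat_natCast]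
  rw [e, Q_eq, Q_eq]

theorem Q_pos : ∀ᶠ n : ℤ in atTop, (0 : ℝ) < Q n := by
  filter_upwards [eventually_ge_atTop (0 : ℤ)] with n hn
  lift n to ℕ using hn
  rw [Q_eq]
  exact_mod_cast PO_pos n

theorem ratio (j : ℕ) : Tendsto (fun n : ℤ => (Q (n - (j : ℤ)) : ℝ) / (Q n : ℝ)) atTop (𝓝 1) := by
  have hsub : ∀ j : ℕ, Tendsto (fun n : ℤ => n - (j : ℤ)) atTop atTop := fun j =>
    tendsto_atTop_add_const_right _ _ tendsto_id
  induction j with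
  | zero =>
    refine tendsto_const_nhds.congr' ?_
    filter_upwards [Q_pos] with n hn
    simp [hn.ne']
  | succ j ih =>
    have h := (ratio_one.comp (hsub j)).mul ih
    rw [one_mul] at h
    refine h.congr' ?_
    filter_upwards [(hsub j).eventually Q_pos, Q_pos] with n h1 h2
    simp only [Function.comp]
    have e : n - ((j + 1 : ℕ) : ℤ) = n - (j : ℤ) - 1 := by push_cast; ring
    rw [e]
    field_simp

theorem combo (K t : ℕ) (a b c d : ℕ → ℕ) : ∀ᶠ n : ℤ in atTop,
    ∑ i ∈ Finset.range K, (Q (n - (a i : ℤ)) + Q (n - (b i : ℤ))) ≤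
      Q (n - (t : ℤ)) + ∑ i ∈ Finset.range K, (Q (n - (c i : ℤ)) + Q (n - (d i : ℤ))) := by
  have h1 : Tendsto (fun n : ℤ => (Q (n - (t : ℤ)) : ℝ) / Q n +
      ∑ i ∈ Finset.range K, ((Q (n - (c i : ℤ)) : ℝ) / Q n + (Q (n - (d i : ℤ)) : ℝ) / Q n) -
      ∑ i ∈ Finset.range K, ((Q (n - (a i : ℤ)) : ℝ) / Q n + (Q (n - (b i : ℤ)) : ℝ) / Q n))
      atTop (𝓝 (1 + ∑ i ∈ Finset.range K, ((1 : ℝ) + 1) - ∑ i ∈ Finset.range K, ((1 : ℝ) + 1))) :=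
    ((ratio t).add (tendsto_finsetSum _ fun i _ => (ratio (c i)).add (ratio (d i)))).sub
      (tendsto_finsetSum _ fun i _ => (ratio (a i)).add (ratio (b i)))
  rw [add_sub_cancel_right] at h1
  filter_upwards [h1.eventually (lt_mem_nhds zero_lt_one), Q_pos] with n hn hq
  simp only [← add_div, ← Finset.sum_div] at hn
  rw [← sub_div] at hn
  have h2 := (div_pos_iff_of_pos_right hq).1 hn
  have h3 := (sub_pos.1 h2).le
  exact_mod_cast h3

/-- For every `k ≥ 1` there is `N_k` such that for all `n ≥ N_k`: if `k` is odd,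
`Q(n−T_{2k−2}) + Σ_{i=0}^{(k−3)/2} (Q(n−T_{4i}) + Q(n−T_{4i+3}))
  ≥ Σ_{i=0}^{(k−3)/2} (Q(n−T_{4i+1}) + Q(n−T_{4i+2}))`,
and if `k` is even,
`Q(n−T_{2k−1}) + Σ_{i=0}^{(k−2)/2} (Q(n−T_{4i+1}) + Q(n−T_{4i+2}))
  ≥ Σ_{i=0}^{(k−2)/2} (Q(n−T_{4i}) + Q(n−T_{4i+3}))`. -/
theorem stmt5 (k : ℕ) (hk : 1 ≤ k) :
    ∃ N : ℤ, ∀ n : ℤ, N ≤ n →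
      (Odd k →
        ∑ i ∈ Finset.range ((k - 1) / 2),
            (Q (n - (T (4 * i + 1) : ℤ)) + Q (n - (T (4 * i + 2) : ℤ)))
          ≤ Q (n - (T (2 * k - 2) : ℤ)) +
            ∑ i ∈ Finset.range ((k - 1) / 2),
              (Q (n - (T (4 * i) : ℤ)) + Q (n - (T (4 * i + 3) : ℤ)))) ∧
      (Even k →
        ∑ i ∈ Finset.range (k / 2),
            (Q (n - (T (4 * i) : ℤ)) + Q (n - (T (4 * i + 3) : ℤ)))
          ≤ Q (n - (T (2 * k - 1) : ℤ)) +
            ∑ i ∈ Finset.range (k / 2),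
              (Q (n - (T (4 * i + 1) : ℤ)) + Q (n - (T (4 * i + 2) : ℤ)))) := by
  obtain ⟨N, hN⟩ := eventually_atTop.1
    ((combo ((k - 1) / 2) (T (2 * k - 2)) (fun i => T (4 * i + 1)) (fun i => T (4 * i + 2))
      (fun i => T (4 * i)) (fun i => T (4 * i + 3))).and
    (combo (k / 2) (T (2 * k - 1)) (fun i => T (4 * i)) (fun i => T (4 * i + 3))
      (fun i => T (4 * i + 1)) (fun i => T (4 * i + 2))))
  exact ⟨N, fun n hn => ⟨fun _ => (hN n hn).1, fun _ => (hN n hn).2⟩⟩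
end

section
/- Let m and s be integers with m ≥ 2 and 0 < s < m, and let q be a complex number with |q| < 1. Then ( ∏_{n=0}^{∞} (1 − q^{s+2mn})(1 − q^{2m−s+2mn})(1 − q^{2m+2mn})(1 − q^{2m−2s+4mn})(1 − q^{2m+2s+4mn}) ) / ( ∏_{n=0}^{∞} (1 − q^{s+mn})(1 − q^{m−s+mn}) ) = Σ_{n∈ℤ} q^{n(mn+s)}. -/
open Filter Topology

/-- infinite product `∏ (1 - q^(e+dn))`. -/
noncomputable def XP (q : ℂ) (e d : ℕ) : ℂ := ∏' n : ℕ, (1 - q ^ (e + d * n))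

lemma summable_pow_aux {q : ℂ} (hq : ‖q‖ < 1) (e d : ℕ) (hd : 0 < d) :
    Summable (fun n : ℕ => ‖q ^ (e + d * n)‖) := by
  have h1 : ‖q‖ ^ d < 1 := pow_lt_one₀ (norm_nonneg _) hq hd.ne'
  have := (summable_geometric_of_lt_one (by positivity) h1).mul_left (‖q‖ ^ e)
  refine this.congr fun n => ?_
  rw [norm_pow, pow_add, pow_mul]

lemma mult_sub {q : ℂ} (hq : ‖q‖ < 1) (e d : ℕ) (hd : 0 < d) :
    Multipliable (fun n : ℕ => 1 - q ^ (e + d * n)) := by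
  have := multipliable_one_add_of_summable (f := fun n : ℕ => - q ^ (e + d * n))
    (by simpa using summable_pow_aux hq e d hd)
  simpa [sub_eq_add_neg] using this

lemma mult_add {q : ℂ} (hq : ‖q‖ < 1) (e d : ℕ) (hd : 0 < d) :
    Multipliable (fun n : ℕ => 1 + q ^ (e + d * n)) :=
  multipliable_one_add_of_summable (summable_pow_aux hq e d hd)

lemma one_sub_pow_ne {q : ℂ} (hq : ‖q‖ < 1) (k : ℕ) (hk : 0 < k) : 1 - q ^ k ≠ 0 := by
  intro h
  have h1 : ‖q ^ k‖ < 1 := by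
    rw [norm_pow]; exact pow_lt_one₀ (norm_nonneg _) hq hk.ne'
  rw [← sub_eq_zero.mp h] at h1
  simp at h1

lemma XP_ne {q : ℂ} (hq : ‖q‖ < 1) (e d : ℕ) (he : 0 < e) (hd : 0 < d) : XP q e d ≠ 0 := by
  have := tprod_one_add_ne_zero_of_summable (f := fun n : ℕ => - q ^ (e + d * n))
    (by
      intro n
      have := one_sub_pow_ne hq (e + d * n) (by omega)
      simpa [sub_eq_add_neg] using this)
    (by simpa using summable_pow_aux hq e d hd)
  simpa [XP, sub_eq_add_neg] using this

lemma XP_split {q : ℂ} (hq : ‖q‖ < 1) (e d : ℕ) (hd : 0 < d) :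
    XP q e d = XP q e (2 * d) * XP q (e + d) (2 * d) := by
  have h1 := mult_sub hq e (2 * d) (by omega)
  have h2 := mult_sub hq (e + d) (2 * d) (by omega)
  have := tprod_even_mul_odd (f := fun n : ℕ => 1 - q ^ (e + d * n))
    (h1.congr fun n => by ring_nf) (h2.congr fun n => by ring_nf)
  rw [XP, ← this, XP, XP]
  congr 1 <;> exact tprod_congr fun n => by ring_nf

lemma XP_sq {q : ℂ} (hq : ‖q‖ < 1) (e d : ℕ) (hd : 0 < d) :
    XP q (2 * e) (2 * d) = XP q e d * ∏' n : ℕ, (1 + q ^ (e + d * n)) := by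
  rw [XP, XP, ← (mult_sub hq e d hd).tprod_mul (mult_add hq e d hd)]
  exact tprod_congr fun n => by ring

/-- reciprocal q-Pochhammer, zero at negative integers -/
noncomputable def rr (p : ℂ) (k : ℤ) : ℂ :=
  if 0 ≤ k then (∏ i ∈ Finset.range k.toNat, (1 - p ^ (i + 1)))⁻¹ else 0

lemma rr_rec {p : ℂ} (hp : ‖p‖ < 1) (k : ℤ) : rr p (k - 1) = (1 - p ^ k) * rr p k := by
  rcases lt_trichotomy k 0 with h | h | h
  · rw [rr, rr, if_neg (by omega), if_neg (by omega), mul_zero]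
  · subst h; simp [rr]
  · obtain ⟨n, rfl⟩ : ∃ n : ℕ, k = n + 1 := ⟨(k - 1).toNat, by omega⟩
    have e1 : ((n : ℤ) + 1 - 1).toNat = n := by omega
    have e2 : ((n : ℤ) + 1).toNat = n + 1 := by omega
    rw [rr, rr, if_pos (by omega), if_pos (by omega), e1, e2, Finset.prod_range_succ, mul_inv]
    have h3 := one_sub_pow_ne hp (n + 1) (by omega)
    have h4 : p ^ ((n : ℤ) + 1) = p ^ (n + 1) := by exact_mod_cast zpow_natCast p (n + 1)
    rw [h4]
    field_simp

lemma fin_jtp {p a b : ℂ} (hp0 : p ≠ 0) (hp : ‖p‖ < 1) (hab : a * b = p) (t : ℤ → ℂ)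
    (t0 : t 0 = 1) (ht1 : ∀ j, t (j + 1) = t j * a * p ^ j) (N : ℕ) :
    HasSum (fun j : ℤ => (∏ i ∈ Finset.range (2 * N), (1 - p ^ (i + 1))) *
      rr p (N + j) * rr p (N - j) * t j)
      (∏ k ∈ Finset.range N, ((1 + a * p ^ k) * (1 + b * p ^ k))) := by
  induction N with
  | zero =>
    have : HasSum (fun j : ℤ => (∏ i ∈ Finset.range (2 * 0), (1 - p ^ (i + 1))) *
      rr p ((0 : ℕ) + j) * rr p ((0 : ℕ) - j) * t j) _ := hasSum_single (0 : ℤ) (by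
        intro j hj
        rcases lt_or_gt_of_ne hj with h | h
        · simp [rr, not_le.mpr h]
        · simp [rr, not_le.mpr h])
    simpa [rr, t0] using this
  | succ N ih =>
    have s1 := (Equiv.hasSum_iff (Equiv.subRight (1 : ℤ))).mpr ih
    have s2 := (Equiv.hasSum_iff (Equiv.addRight (1 : ℤ))).mpr ih
    have := ((ih.mul_left (1 + p ^ (2 * N + 1))).add (s1.mul_left (a * p ^ N))).add
      (s2.mul_left (b * p ^ N))
    rw [Finset.prod_range_succ]
    convert this using 1
    · rfl
    · funext j
      simp only [Function.comp, Equiv.coe_addRight, Equiv.subRight_apply]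
      have e0 : 2 * (N + 1) = 2 * N + 1 + 1 := by ring
      rw [e0, Finset.prod_range_succ, Finset.prod_range_succ]
      set Q := ∏ i ∈ Finset.range (2 * N), (1 - p ^ (i + 1))
      have f1 : a * t (j - 1) = t j * p ^ (1 - j) := by
        have := ht1 (j - 1)
        rw [sub_add_cancel] at this
        rw [this]
        have : p ^ (j - 1) * p ^ (1 - j) = 1 := by rw [← zpow_add₀ hp0]; simp
        linear_combination (-a * t (j - 1)) * this
      have f2 : b * t (j + 1) = t j * p ^ (j + 1) := by
        rw [ht1, zpow_add₀ hp0, zpow_one, ← hab]; ring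
      obtain ⟨A, hA⟩ : ∃ A, A = p ^ ((N : ℤ) + j) := ⟨_, rfl⟩
      obtain ⟨B, hB⟩ : ∃ B, B = p ^ ((N : ℤ) - j) := ⟨_, rfl⟩
      have hAB : A * B = p ^ (2 * N) := by
        rw [hA, hB, ← zpow_add₀ hp0, ← zpow_natCast]; congr 1; push_cast; ring
      have hB1 : p ^ N * p ^ (1 - j) = p * B := by
        rw [hB, ← zpow_natCast, ← zpow_add₀ hp0, ← zpow_one_add₀ hp0]; congr 1; ring
      have hA1 : p ^ N * p ^ (j + 1) = p * A := by
        rw [hA, ← zpow_natCast, ← zpow_add₀ hp0, ← zpow_one_add₀ hp0]; congr 1; ring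
      have r1 := rr_rec hp (N + 1 + j)
      have r2 := rr_rec hp (N + 1 - j)
      have r3 := rr_rec hp (N + j)
      have r4 := rr_rec hp (N - j)
      have g1 : p ^ ((N : ℤ) + 1 + j) = p * A := by
        rw [hA, ← zpow_one_add₀ hp0]; congr 1; ring
      have g2 : p ^ ((N : ℤ) + 1 - j) = p * B := by
        rw [hB, ← zpow_one_add₀ hp0]; congr 1; ring
      rw [g1, show (N : ℤ) + 1 + j - 1 = N + j by ring] at r1
      rw [g2, show (N : ℤ) + 1 - j - 1 = N - j by ring] at r2
      rw [← hA] at r3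
      rw [← hB] at r4
      push_cast
      rw [show (N : ℤ) + (j - 1) = N + j - 1 by ring, show (N : ℤ) - (j - 1) = N + 1 - j by ring,
        show (N : ℤ) + (j + 1) = N + 1 + j by ring, show (N : ℤ) - (j + 1) = N - j - 1 by ring,
        r3, r4, r1, r2]
      have h1 : p ^ (2 * N + 1) = A * B * p := by rw [pow_succ, hAB]
      have h2 : p ^ (2 * N + 1 + 1) = A * B * p * p := by rw [pow_succ, h1]
      rw [h1, h2]
      set R := rr p (N + 1 + j)
      set S := rr p (N + 1 - j)
      have k1 : a * p ^ N * t (j - 1) = t j * (p * B) := by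
        rw [← hB1]; linear_combination p ^ N * f1
      have k2 : b * p ^ N * t (j + 1) = t j * (p * A) := by
        rw [← hA1]; linear_combination p ^ N * f2
      linear_combination (-(Q * (1 - A) * (1 - p * A) * R * S)) * k1
        - (Q * (1 - B) * (1 - p * B) * R * S) * k2
    · rw [show p ^ (2 * N + 1) = a * b * p ^ N * p ^ N by rw [hab]; ring]
      ring

lemma pp_tendsto {p : ℂ} (hp : ‖p‖ < 1) :
    Tendsto (fun n : ℕ => ∏ i ∈ Finset.range n, (1 - p ^ (i + 1))) atTop (𝓝 (XP p 1 1)) := by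
  have := (mult_sub hp 1 1 one_pos).tendsto_prod_tprod_nat
  simpa [XP, add_comm] using this

lemma rr_tendsto {p : ℂ} (hp : ‖p‖ < 1) : Tendsto (rr p) atTop (𝓝 (XP p 1 1)⁻¹) := by
  have h := ((pp_tendsto hp).inv₀ (XP_ne hp 1 1 one_pos one_pos)).comp
    (tendsto_atTop_atTop.mpr fun b => ⟨(b : ℤ), fun k hk => by omega⟩ :
      Tendsto Int.toNat atTop atTop)
  refine h.congr' ?_
  filter_upwards [eventually_ge_atTop 0] with k hk
  simp [rr, hk]

lemma rr_bdd {p : ℂ} (hp : ‖p‖ < 1) : ∃ C, ∀ k, ‖rr p k‖ ≤ C := by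
  have h := (pp_tendsto hp).inv₀ (XP_ne hp 1 1 one_pos one_pos)
  obtain ⟨C, hC⟩ := (Metric.isBounded_range_of_tendsto _ h).exists_norm_le
  refine ⟨C, fun k => ?_⟩
  have h0 : 0 ≤ C := (norm_nonneg _).trans (hC _ ⟨0, rfl⟩)
  rw [rr]
  split_ifs
  · exact hC _ ⟨k.toNat, rfl⟩
  · simpa using h0

lemma jtp {p a b : ℂ} (hp0 : p ≠ 0) (hp : ‖p‖ < 1) (hab : a * b = p) (t : ℤ → ℂ)
    (t0 : t 0 = 1) (ht1 : ∀ j, t (j + 1) = t j * a * p ^ j) (hs : Summable (fun j => ‖t j‖))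
    (P : ℂ) (hP : Tendsto (fun N : ℕ => ∏ k ∈ Finset.range N, ((1 + a * p ^ k) * (1 + b * p ^ k)))
      atTop (𝓝 P)) : ∑' j, t j = XP p 1 1 * P := by
  obtain ⟨C, hC⟩ := rr_bdd hp
  obtain ⟨D, hD⟩ := (Metric.isBounded_range_of_tendsto _ (pp_tendsto hp)).exists_norm_le
  have hD0 : 0 ≤ D := (norm_nonneg _).trans (hD _ ⟨0, rfl⟩)
  have hC0 : 0 ≤ C := (norm_nonneg _).trans (hC 0)
  have hX := XP_ne hp 1 1 one_pos one_pos
  have key := tendsto_tsum_of_dominated_convergence (𝓕 := atTop)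
    (f := fun (N : ℕ) (j : ℤ) => (∏ i ∈ Finset.range (2 * N), (1 - p ^ (i + 1))) *
      rr p (N + j) * rr p (N - j) * t j)
    (g := fun j => XP p 1 1 * (XP p 1 1)⁻¹ * (XP p 1 1)⁻¹ * t j)
    (bound := fun j => D * C * C * ‖t j‖) (hs.mul_left _)
    (by
      intro j
      refine (((?_ : Tendsto _ _ _).mul ?_).mul ?_).mul tendsto_const_nhds
      · exact (pp_tendsto hp).comp (tendsto_id.const_mul_atTop' two_pos)
      · exact (rr_tendsto hp).comp (tendsto_atTop_add_const_right _ _ tendsto_natCast_atTop_atTop)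
      · simp only [sub_eq_add_neg]
        exact (rr_tendsto hp).comp (tendsto_atTop_add_const_right _ _ tendsto_natCast_atTop_atTop))
    (Eventually.of_forall fun N j => by
      simp only [norm_mul]
      gcongr
      · exact hD _ ⟨2 * N, rfl⟩
      · exact hC _
      · exact hC _)
  have e : ∀ N : ℕ, ∑' j : ℤ, (∏ i ∈ Finset.range (2 * N), (1 - p ^ (i + 1))) *
      rr p (N + j) * rr p (N - j) * t j = _ := fun N => (fin_jtp hp0 hp hab t t0 ht1 N).tsum_eq
  simp only [e] at key
  have := tendsto_nhds_unique hP key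
  rw [this, tsum_mul_left]
  field_simp

theorem stmt7 (m s : ℕ) (hm : 2 ≤ m) (hs : 0 < s) (hsm : s < m)
    (q : ℂ) (hq : ‖q‖ < 1) :
    (∏' n : ℕ, ((1 - q ^ (s + 2 * m * n)) * (1 - q ^ (2 * m - s + 2 * m * n)) *
        (1 - q ^ (2 * m + 2 * m * n)) * (1 - q ^ (2 * m - 2 * s + 4 * m * n)) *
        (1 - q ^ (2 * m + 2 * s + 4 * m * n)))) /
      (∏' n : ℕ, ((1 - q ^ (s + m * n)) * (1 - q ^ (m - s + m * n)))) =
    ∑' n : ℤ, q ^ (n * ((m : ℤ) * n + (s : ℤ))) := by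
  have M := fun e d hd => mult_sub hq e d hd
  have hm2 : 0 < 2 * m := by omega
  have hm4 : 0 < 4 * m := by omega
  have hm0 : 0 < m := by omega
  rw [((((M s _ hm2).mul (M (2 * m - s) _ hm2)).mul (M (2 * m) _ hm2)).mul
      (M (2 * m - 2 * s) _ hm4)).tprod_mul (M (2 * m + 2 * s) _ hm4),
    (((M s _ hm2).mul (M (2 * m - s) _ hm2)).mul (M (2 * m) _ hm2)).tprod_mul
      (M (2 * m - 2 * s) _ hm4),
    ((M s _ hm2).mul (M (2 * m - s) _ hm2)).tprod_mul (M (2 * m) _ hm2),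
    (M s _ hm2).tprod_mul (M (2 * m - s) _ hm2),
    (M s _ hm0).tprod_mul (M (m - s) _ hm0)]
  change (XP q s (2 * m) * XP q (2 * m - s) (2 * m) * XP q (2 * m) (2 * m) *
    XP q (2 * m - 2 * s) (4 * m) * XP q (2 * m + 2 * s) (4 * m)) /
    (XP q s m * XP q (m - s) m) = _
  rw [XP_split hq s m hm0, XP_split hq (m - s) m hm0,
    show 2 * m - 2 * s = 2 * (m - s) by omega, show 4 * m = 2 * (2 * m) by ring,
    show 2 * m + 2 * s = 2 * (s + m) by ring, XP_sq hq (m - s) (2 * m) hm2,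
    XP_sq hq (s + m) (2 * m) hm2, show m - s + m = 2 * m - s by omega]
  have n1 := XP_ne hq s (2 * m) hs hm2
  have n2 := XP_ne hq (s + m) (2 * m) (by omega) hm2
  have n3 := XP_ne hq (m - s) (2 * m) (by omega) hm2
  have n4 := XP_ne hq (2 * m - s) (2 * m) (by omega) hm2
  have main : ∑' n : ℤ, q ^ (n * ((m : ℤ) * n + (s : ℤ))) = XP q (2 * m) (2 * m) *
      ((∏' n : ℕ, (1 + q ^ (s + m + 2 * m * n))) * ∏' n : ℕ, (1 + q ^ (m - s + 2 * m * n))) := by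
    by_cases hq0 : q = 0
    · subst hq0
      rw [tsum_eq_single 0]
      · have z1 : ∀ n, s + m + 2 * m * n ≠ 0 := fun n => by omega
        have z2 : ∀ n, m - s + 2 * m * n ≠ 0 := fun n => by omega
        have z3 : ∀ n, 2 * m + 2 * m * n ≠ 0 := fun n => by omega
        simp only [XP, zero_pow (z1 _), zero_pow (z2 _), zero_pow (z3 _)]
        simp
      · intro n hn
        refine zero_zpow _ (mul_ne_zero hn ?_)
        intro h
        rcases lt_or_gt_of_ne hn with h' | h'
        · nlinarith
        · nlinarith
    have hX : XP q (2 * m) (2 * m) = XP (q ^ (2 * m)) 1 1 :=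
      tprod_congr fun n => by rw [← pow_mul]; congr 2; ring
    rw [hX, ← (mult_add hq (s + m) _ hm2).tprod_mul (mult_add hq (m - s) _ hm2)]
    refine jtp (a := q ^ (s + m)) (b := q ^ (m - s)) (pow_ne_zero _ hq0) ?_ ?_ _ ?_ ?_ ?_ _ ?_
    · rw [norm_pow]; exact pow_lt_one₀ (norm_nonneg _) hq (by omega)
    · rw [← pow_add]; congr 1; omega
    · simp
    · intro j
      rw [← zpow_natCast, ← zpow_natCast, ← zpow_mul, ← zpow_add₀ hq0, ← zpow_add₀ hq0]
      congr 1; push_cast; ring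
    · have hsum : Summable (fun j : ℤ => ‖q‖ ^ j.natAbs) := by
        apply Summable.of_nat_of_neg
        · simpa using summable_geometric_of_lt_one (norm_nonneg _) hq
        · simpa using summable_geometric_of_lt_one (norm_nonneg _) hq
      refine Summable.of_nonneg_of_le (fun _ => norm_nonneg _) (fun j => ?_) hsum
      have hle : (j.natAbs : ℤ) ≤ j * (m * j + s) := by
        have hms : (s : ℤ) + 1 ≤ m := by exact_mod_cast hsm
        have hs' : (1 : ℤ) ≤ s := by exact_mod_cast hs
        rcases le_or_gt 0 j with h | h
        · rw [Int.natAbs_of_nonneg h]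
          rcases h.eq_or_lt with h | h
          · simp [← h]
          · nlinarith [mul_pos h h]
        · rw [Int.ofNat_natAbs_of_nonpos h.le]
          have : (m : ℤ) * j + s ≤ -1 := by nlinarith
          nlinarith
      rw [norm_zpow, ← zpow_natCast]
      exact zpow_le_zpow_right_of_le_one₀ (norm_pos_iff.mpr hq0) hq.le hle
    · have := ((mult_add hq (s + m) _ hm2).mul (mult_add hq (m - s) _ hm2)).tendsto_prod_tprod_nat
      refine this.congr fun N => Finset.prod_congr rfl fun k _ => ?_
      rw [pow_add q (s + m), pow_add q (m - s), pow_mul q (2 * m)]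
  rw [main]
  field_simp
end

section
/- Let m and s be integers with m ≥ 2 and 0 < s < m, and let q be a complex number with |q| < 1. Then ∏_{n=0}^{∞} (1 + q^{m+s+2mn})(1 + q^{m−s+2mn})(1 − q^{2m+2mn}) = Σ_{n∈ℤ} q^{n(mn+s)}. -/
namespace JTP
open Filter Topology

/-- finite q-Pochhammer `(p;p)_k` -/
noncomputable def poch (p : ℂ) (k : ℕ) : ℂ := ∏ i ∈ Finset.range k, (1 - p ^ (i + 1))

/-- reciprocal of the q-Pochhammer, zero at negative indices -/
noncomputable def r (p : ℂ) (k : ℤ) : ℂ := if k < 0 then 0 else (poch p k.toNat)⁻¹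

lemma one_sub_ne (p : ℂ) (hp : ‖p‖ < 1) (i : ℕ) : 1 - p ^ (i + 1) ≠ 0 := by
  intro h
  have h1 : p ^ (i + 1) = 1 := (sub_eq_zero.mp h).symm
  have h2 : ‖p‖ ^ (i + 1) = 1 := by rw [← norm_pow, h1, norm_one]
  exact (pow_lt_one₀ (norm_nonneg p) hp (by omega)).ne h2

lemma r_rec (p : ℂ) (hp : ‖p‖ < 1) (k : ℤ) : r p (k - 1) = (1 - p ^ k) * r p k := by
  rcases lt_trichotomy k 0 with h | h | h
  · simp [r, h, show k - 1 < 0 by omega]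
  · subst h; simp [r]
  · obtain ⟨j, rfl⟩ : ∃ j : ℕ, k = ((j + 1 : ℕ) : ℤ) := ⟨(k - 1).toNat, by omega⟩
    have h1 : ((j + 1 : ℕ) : ℤ) - 1 = (j : ℤ) := by push_cast; ring
    have h2 : ¬ ((j : ℤ) < 0) := by omega
    have h3 : ¬ (((j + 1 : ℕ) : ℤ) < 0) := by omega
    rw [h1, zpow_natCast]
    simp only [r, h2, h3, if_false, Int.toNat_natCast, poch, Finset.prod_range_succ]
    have := one_sub_ne p hp j
    rw [mul_inv, mul_comm, mul_assoc, inv_mul_cancel₀ this, mul_one]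

/-- q-binomial weight -/
noncomputable def c (p : ℂ) (N : ℕ) (n : ℤ) : ℂ := poch p (2 * N) * r p (N + n) * r p (N - n)

lemma c_rec (p : ℂ) (hp : ‖p‖ < 1) (h0 : p ≠ 0) (N : ℕ) (n : ℤ) :
    c p (N + 1) n = c p N n * (1 + p ^ (2 * N + 1)) + c p N (n - 1) * p ^ (N + 1 - n : ℤ)
      + c p N (n + 1) * p ^ (N + 1 + n : ℤ) := by
  unfold c
  have e1 : poch p (2 * (N + 1)) = poch p (2 * N) * (1 - p ^ (2 * N + 1)) * (1 - p ^ (2 * N + 2)) := by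
    rw [show 2 * (N + 1) = 2 * N + 1 + 1 by ring]
    simp [poch, Finset.prod_range_succ]
  set A : ℂ := p ^ (N + 1 + n : ℤ) with hA
  set B : ℂ := p ^ (N + 1 - n : ℤ) with hB
  have hA' : p ^ (N + n : ℤ) = A / p := by
    rw [hA, eq_div_iff h0, ← zpow_add_one₀ h0]; congr 1; ring
  have hB' : p ^ (N - n : ℤ) = B / p := by
    rw [hB, eq_div_iff h0, ← zpow_add_one₀ h0]; congr 1; ring
  have hAB : p ^ (2 * N + 2) = A * B := by
    rw [hA, hB, ← zpow_add₀ h0, ← zpow_natCast]; congr 1; push_cast; ring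
  have hAB' : p ^ (2 * N + 1) = A * B / p := by
    rw [eq_div_iff h0, ← hAB, ← pow_succ]
  have r1 := r_rec p hp (N + 1 + n)
  have r2 := r_rec p hp (N + n)
  have s1 := r_rec p hp (N + 1 - n)
  have s2 := r_rec p hp (N - n)
  rw [show (N + 1 + n - 1 : ℤ) = N + n by ring] at r1
  rw [show (N + 1 - n - 1 : ℤ) = N - n by ring] at s1
  rw [e1, hAB, hAB']
  rw [show (N + (n - 1) : ℤ) = N + n - 1 by ring, show (N - (n - 1) : ℤ) = N + 1 - n by ring,
    show (N + (n + 1) : ℤ) = N + 1 + n by ring, show (N - (n + 1) : ℤ) = N - n - 1 by ring,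
    show (((N + 1 : ℕ) : ℤ) + n) = N + 1 + n by push_cast; ring,
    show (((N + 1 : ℕ) : ℤ) - n) = N + 1 - n by push_cast; ring]
  rw [r2, s2, r1, s1, hA', hB', ← hA, ← hB]
  field_simp
  ring

lemma finite_jtp (p x y : ℂ) (a : ℤ → ℂ) (hp : ‖p‖ < 1) (h0 : p ≠ 0) (hxy : x * y = p)
    (ha0 : a 0 = 1) (hax : ∀ n, a (n + 1) = a n * p ^ n * x)
    (hay : ∀ n, a (n - 1) = a n * p ^ (-n) * y) (N : ℕ) :
    HasSum (fun n => c p N n * a n)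
      (∏ i ∈ Finset.range N, ((1 + x * p ^ i) * (1 + y * p ^ i))) := by
  induction N with
  | zero =>
    have := hasSum_single (f := fun n => c p 0 n * a n) 0 (by
      intro n hn
      rcases lt_or_gt_of_ne hn with h | h
      · simp [c, r, h]
      · simp [c, r, h])
    simpa [c, r, poch, ha0] using this
  | succ N ih =>
    have h1 := (Equiv.addRight (-1 : ℤ)).hasSum_iff.mpr ih
    have h2 := (Equiv.addRight (1 : ℤ)).hasSum_iff.mpr ih
    have h := ((ih.mul_right (1 + p ^ (2 * N + 1))).add (h1.mul_right (x * p ^ N))).add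
      (h2.mul_right (y * p ^ N))
    rw [Finset.prod_range_succ]
    convert h using 1
    · rfl
    · funext n
      simp only [Function.comp, Equiv.coe_addRight, ← sub_eq_add_neg]
      rw [c_rec p hp h0]
      have e1 : a n * p ^ (N + 1 - n : ℤ) = a (n - 1) * (x * p ^ N) := by
        have := hax (n - 1)
        rw [sub_add_cancel] at this
        rw [this, show (N + 1 - n : ℤ) = N + -(n - 1) by ring, zpow_add₀ h0, zpow_neg, zpow_natCast]
        have := zpow_ne_zero (n - 1) h0
        field_simp
      have e2 : a n * p ^ (N + 1 + n : ℤ) = a (n + 1) * (y * p ^ N) := by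
        have := hay (n + 1)
        rw [add_sub_cancel_right] at this
        rw [this, show (N + 1 + n : ℤ) = N + (n + 1) by ring, zpow_add₀ h0, zpow_neg, zpow_natCast]
        have := zpow_ne_zero (n + 1) h0
        field_simp
      linear_combination c p N (n - 1) * e1 + c p N (n + 1) * e2
    · have : p ^ (2 * N + 1) = x * y * p ^ N * p ^ N := by rw [hxy]; ring
      rw [this]; ring

lemma summable_norm_geo (p : ℂ) (hp : ‖p‖ < 1) (x : ℂ) :
    Summable (fun i : ℕ => ‖x * p ^ i‖) := by
  simp only [norm_mul, norm_pow]
  exact (summable_geometric_of_lt_one (norm_nonneg p) hp).mul_left _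

lemma tendsto_prod (p : ℂ) (hp : ‖p‖ < 1) (x : ℂ) :
    Tendsto (fun N => ∏ i ∈ Finset.range N, (1 + x * p ^ i)) atTop
      (𝓝 (∏' i : ℕ, (1 + x * p ^ i))) :=
  (multipliable_one_add_of_summable (summable_norm_geo p hp x)).hasProd.tendsto_prod_nat

lemma poch_eq (p : ℂ) (N : ℕ) : poch p N = ∏ i ∈ Finset.range N, (1 + (-p) * p ^ i) := by
  unfold poch
  refine Finset.prod_congr rfl fun i _ => ?_
  ring

lemma poch_tendsto (p : ℂ) (hp : ‖p‖ < 1) :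
    ∃ L : ℂ, L ≠ 0 ∧ Tendsto (poch p) atTop (𝓝 L) := by
  refine ⟨∏' i : ℕ, (1 + (-p) * p ^ i), ?_, ?_⟩
  · refine tprod_one_add_ne_zero_of_summable (fun i => ?_) (summable_norm_geo p hp _)
    have := one_sub_ne p hp i
    rwa [show 1 + (-p) * p ^ i = 1 - p ^ (i + 1) by ring]
  · have := tendsto_prod p hp (-p)
    simpa only [← poch_eq] using this

lemma bdd_of_tendsto (u : ℕ → ℂ) (L : ℂ) (h : Tendsto u atTop (𝓝 L)) :
    ∃ C, 0 ≤ C ∧ ∀ n, ‖u n‖ ≤ C := by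
  obtain ⟨C, hC⟩ := h.norm.bddAbove_range
  exact ⟨C, (norm_nonneg _).trans (hC ⟨0, rfl⟩), fun n => hC ⟨n, rfl⟩⟩

lemma jtp (p x y : ℂ) (a : ℤ → ℂ) (hp : ‖p‖ < 1) (h0 : p ≠ 0) (hxy : x * y = p)
    (ha0 : a 0 = 1) (hax : ∀ n, a (n + 1) = a n * p ^ n * x)
    (hay : ∀ n, a (n - 1) = a n * p ^ (-n) * y) (hs : Summable (fun n => ‖a n‖)) :
    Tendsto (fun N => ∏ i ∈ Finset.range N,
      ((1 + x * p ^ i) * (1 + y * p ^ i) * (1 - p ^ (i + 1)))) atTop (𝓝 (∑' n, a n)) := by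
  obtain ⟨L, hL, hP⟩ := poch_tendsto p hp
  obtain ⟨C, hC0, hC⟩ := bdd_of_tendsto _ _ hP
  obtain ⟨D, hD0, hD⟩ := bdd_of_tendsto _ _ (hP.inv₀ hL)
  have hr : ∀ k, ‖r p k‖ ≤ D := by
    intro k
    unfold r
    split_ifs
    · simpa using hD0
    · exact hD _
  have hrt : ∀ f : ℕ → ℤ, Tendsto f atTop atTop → Tendsto (fun N => r p (f N)) atTop (𝓝 L⁻¹) := by
    intro f hf
    have h1 : Tendsto (fun N => (f N).toNat) atTop atTop := by
      refine tendsto_atTop.mpr fun b => ?_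
      filter_upwards [hf.eventually_ge_atTop (b : ℤ)] with N hN
      omega
    refine ((hP.inv₀ hL).comp h1).congr' ?_
    filter_upwards [hf.eventually_ge_atTop 0] with N hN
    simp [r, not_lt.mpr hN]
  have hc : ∀ n, Tendsto (fun N => c p N n) atTop (𝓝 (L * L⁻¹ * L⁻¹)) := by
    intro n
    unfold c
    refine (Tendsto.mul ?_ (hrt _ ?_)).mul (hrt _ ?_)
    · exact hP.comp (tendsto_id.const_mul_atTop' (by norm_num))
    · exact tendsto_atTop_add_const_right _ _ tendsto_natCast_atTop_atTop
    · simp only [sub_eq_add_neg]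
      exact tendsto_atTop_add_const_right _ _ tendsto_natCast_atTop_atTop
  have hcb : ∀ N n, ‖c p N n‖ ≤ C * D * D := by
    intro N n
    unfold c
    rw [norm_mul, norm_mul]
    gcongr
    · exact hC _
    · exact hr _
    · exact hr _
  have key := tendsto_tsum_of_dominated_convergence (𝓕 := atTop)
    (f := fun N n => c p N n * a n) (g := fun n => L * L⁻¹ * L⁻¹ * a n)
    (bound := fun n => C * D * D * ‖a n‖) (hs.mul_left _) (fun n => (hc n).mul_const _)
    (Eventually.of_forall fun N n => by
      rw [norm_mul]
      exact mul_le_mul_of_nonneg_right (hcb N n) (norm_nonneg _))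
  have key2 := key.mul hP
  rw [tsum_mul_left] at key2
  have e : L * L⁻¹ * L⁻¹ * (∑' n, a n) * L = ∑' n, a n := by field_simp
  rw [e] at key2
  refine key2.congr fun N => ?_
  rw [(finite_jtp p x y a hp h0 hxy ha0 hax hay N).tsum_eq, poch, ← Finset.prod_mul_distrib]

lemma exp_bound (m s : ℕ) (hsm : s < m) (n : ℤ) : (n.natAbs : ℤ) ≤ n * ((m : ℤ) * n + s) := by
  have hm : (s : ℤ) + 1 ≤ m := by exact_mod_cast hsm
  have hs : (0 : ℤ) ≤ s := by positivity
  rcases lt_trichotomy n 0 with h | h | h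
  · have : (n.natAbs : ℤ) = -n := by omega
    rw [this]
    have : (m : ℤ) * n + s ≤ -1 := by nlinarith
    nlinarith
  · simp [h]
  · have : (n.natAbs : ℤ) = n := by omega
    rw [this]
    have : 1 ≤ (m : ℤ) * n + s := by nlinarith
    nlinarith

lemma summable_a (m s : ℕ) (hsm : s < m) (q : ℂ) (hq : ‖q‖ < 1) (h0 : q ≠ 0) :
    Summable (fun n : ℤ => ‖q ^ (n * ((m : ℤ) * n + (s : ℤ)))‖) := by
  have hb : Summable (fun n : ℤ => ‖q‖ ^ n.natAbs) := by
    have := summable_geometric_of_lt_one (norm_nonneg q) hq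
    apply Summable.of_nat_of_neg <;> simpa using this
  refine hb.of_nonneg_of_le (fun _ => norm_nonneg _) fun n => ?_
  rw [norm_zpow, ← zpow_natCast]
  exact zpow_le_zpow_right_of_le_one₀ (norm_pos_iff.mpr h0) hq.le (exp_bound m s hsm n)

lemma multipliable_three (p x y : ℂ) (hp : ‖p‖ < 1) :
    Multipliable (fun i : ℕ => (1 + x * p ^ i) * (1 + y * p ^ i) * (1 - p ^ (i + 1))) := by
  have h := ((multipliable_one_add_of_summable (summable_norm_geo p hp x)).mul
    (multipliable_one_add_of_summable (summable_norm_geo p hp y))).mul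
    (multipliable_one_add_of_summable (summable_norm_geo p hp (-p)))
  refine h.congr fun i => ?_
  ring

end JTP

/-- For integers `m ≥ 2`, `0 < s < m` and `|q| < 1`:
`(−q^{m+s}; q^{2m})_∞ (−q^{m−s}; q^{2m})_∞ (q^{2m}; q^{2m})_∞ = Σ_{n∈ℤ} q^{n(mn+s)}`. -/
theorem stmt8 (m s : ℕ) (hm : 2 ≤ m) (hs : 0 < s) (hsm : s < m)
    (q : ℂ) (hq : ‖q‖ < 1) :
    (∏' n : ℕ, ((1 + q ^ (m + s + 2 * m * n)) * (1 + q ^ (m - s + 2 * m * n)) *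
        (1 - q ^ (2 * m + 2 * m * n)))) =
    ∑' n : ℤ, q ^ (n * ((m : ℤ) * n + (s : ℤ))) := by
  by_cases h0 : q = 0
  · subst h0
    rw [tsum_eq_single 0]
    · have : ∀ n : ℕ, ((1 + (0 : ℂ) ^ (m + s + 2 * m * n)) * (1 + (0 : ℂ) ^ (m - s + 2 * m * n)) *
        (1 - (0 : ℂ) ^ (2 * m + 2 * m * n))) = 1 := by
        intro n
        rw [zero_pow (by omega), zero_pow (by omega), zero_pow (by omega)]
        norm_num
      simp [this]
    · intro n hn
      have := JTP.exp_bound m s hsm n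
      exact zero_zpow _ (by omega)
  · have hp : ‖q ^ (2 * m)‖ < 1 := by
      rw [norm_pow]
      exact pow_lt_one₀ (norm_nonneg q) hq (by omega)
    have hms : ((m - s : ℕ) : ℤ) = m - s := by omega
    have h := JTP.jtp (q ^ (2 * m)) (q ^ (m + s)) (q ^ (m - s))
      (fun n : ℤ => q ^ (n * ((m : ℤ) * n + (s : ℤ)))) hp (pow_ne_zero _ h0)
      (by rw [← pow_add]; congr 1; omega) (by simp)
      (by
        intro n
        simp only [← zpow_natCast, ← zpow_mul, ← zpow_add₀ h0]
        congr 1; push_cast; ring)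
      (by
        intro n
        simp only [← zpow_natCast, ← zpow_mul, ← zpow_add₀ h0]
        congr 1; rw [hms]; push_cast; ring)
      (JTP.summable_a m s hsm q hq h0)
    have h2 := (JTP.multipliable_three (q ^ (2 * m)) (q ^ (m + s)) (q ^ (m - s)) hp).hasProd.tendsto_prod_nat
    rw [← tendsto_nhds_unique h2 h]
    refine tprod_congr fun n => ?_
    simp only [← pow_mul, ← pow_add]
    rw [show 2 * m * (n + 1) = 2 * m + 2 * m * n by ring]
end

section
/- Let a ∈ {1, 3} and let q be a complex number with |q| < 1. Then Σ_{j ∈ S_a} q^j = ∏_{n=1}^{∞} (1 − q^{8n})(1 + q^{8n−4+a})(1 + q^{8n−4−a}), where S_a is the set of non-negative integers j such that 16j + a² is a perfect square (equivalently, S_a = { k(4k − a) : k ∈ ℤ }). -/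
open Filter Topology

namespace JTP

/-- Triangular number of an integer. -/
def T (k : ℤ) : ℕ := (k * (k + 1) / 2).toNat

lemma two_T (k : ℤ) : 2 * (T k : ℤ) = k * (k + 1) := by
  have h1 : 2 ∣ k * (k + 1) := (Int.even_mul_succ_self k).two_dvd
  have h2 : 0 ≤ k * (k + 1) := by
    rcases le_or_gt 0 k with h | h
    · positivity
    · nlinarith
  unfold T
  omega

lemma T_neg (k : ℤ) : T (-k) = T (k - 1) := by
  have h1 := two_T (-k)
  have h2 := two_T (k - 1)
  have : (T (-k) : ℤ) = T (k - 1) := by linarith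
  exact_mod_cast this

noncomputable def E (x y : ℂ) (k : ℤ) : ℂ := x ^ T k * y ^ T (k - 1)

lemma E_neg (x y : ℂ) (k : ℤ) : E x y (-k) = E y x k := by
  unfold E
  rw [T_neg, show -k - 1 = -(k + 1) by ring, T_neg, show k + 1 - 1 = k by ring, mul_comm]

lemma E_step (x y : ℂ) (k : ℤ) (M u : ℕ) (h : (M : ℤ) + 1 - k = u) :
    E x y k * (x * y) ^ u = x * (x * y) ^ M * E x y (k - 1) := by
  unfold E
  have h0 := two_T k
  have h1 := two_T (k - 1)
  have h2 := two_T (k - 1 - 1)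
  have e1 : T k + u = 1 + M + T (k - 1) := by
    have : (T k : ℤ) + u = 1 + M + T (k - 1) := by linarith
    exact_mod_cast this
  have e2 : T (k - 1) + u = M + T (k - 1 - 1) := by
    have : (T (k - 1) : ℤ) + u = M + T (k - 1 - 1) := by linarith
    exact_mod_cast this
  calc _ = x ^ (T k + u) * y ^ (T (k - 1) + u) := by ring
    _ = _ := by rw [e1, e2]; ring

noncomputable def P (p : ℂ) (n : ℕ) : ℂ := ∏ i ∈ Finset.range n, (1 - p ^ (i + 1))

lemma fac_ne {p : ℂ} (hp : ‖p‖ < 1) (n : ℕ) : 1 - p ^ (n + 1) ≠ 0 := by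
  intro h
  have : ‖p ^ (n + 1)‖ = 1 := by rw [← sub_eq_zero.mp h]; simp
  rw [norm_pow] at this
  have h2 := pow_lt_one₀ (norm_nonneg p) hp (Nat.succ_ne_zero n)
  exact absurd this h2.ne

lemma P_ne {p : ℂ} (hp : ‖p‖ < 1) (n : ℕ) : P p n ≠ 0 :=
  Finset.prod_ne_zero_iff.mpr fun i _ => fac_ne hp i

noncomputable def R (p : ℂ) (k : ℤ) : ℂ := if 0 ≤ k then (P p k.toNat)⁻¹ else 0

lemma R_nat (p : ℂ) (n : ℕ) : R p n = (P p n)⁻¹ := by simp [R]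

lemma R_neg (p : ℂ) {k : ℤ} (h : k < 0) : R p k = 0 := by simp [R, not_le.mpr h]

lemma R_step {p : ℂ} (hp : ‖p‖ < 1) (n : ℕ) : R p ((n : ℤ) - 1) = (1 - p ^ n) * R p n := by
  cases n with
  | zero => simp [R]
  | succ n =>
    rw [show ((n + 1 : ℕ) : ℤ) - 1 = n by push_cast; ring, R_nat, R_nat]
    have h := P_ne hp n
    have h2 := fac_ne hp n
    have : P p (n + 1) = P p n * (1 - p ^ (n + 1)) := Finset.prod_range_succ _ _
    rw [this]
    field_simp

lemma term_step {x y : ℂ} (hp : ‖x * y‖ < 1) (M N : ℕ) (k : ℤ) :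
    (1 - (x * y) ^ (M + N + 1)) *
      (R (x * y) ((M + 1 : ℕ) - k) * R (x * y) (N + k) * E x y k) =
    R (x * y) (M - k) * R (x * y) (N + k) * E x y k +
      x * (x * y) ^ M *
        (R (x * y) (M - (k - 1)) * R (x * y) (N + (k - 1)) * E x y (k - 1)) := by
  have e : (M : ℤ) - (k - 1) = (M + 1 : ℕ) - k := by push_cast; ring
  rw [e]
  rcases lt_or_ge (((M + 1 : ℕ) : ℤ) - k) 0 with h | h
  · rw [R_neg _ h, R_neg (k := M - k) _ (by push_cast at h; linarith)]; ring
  rcases lt_or_ge ((N : ℤ) + k) 0 with h' | h'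
  · rw [R_neg _ h', R_neg (k := N + (k - 1)) _ (by linarith)]; ring
  obtain ⟨u, hu⟩ := Int.eq_ofNat_of_zero_le h
  obtain ⟨v, hv⟩ := Int.eq_ofNat_of_zero_le h'
  rw [show (M : ℤ) - k = u - 1 by rw [← hu]; push_cast; ring,
    show (N : ℤ) + (k - 1) = v - 1 by rw [← hv]; ring, hu, hv, R_step hp, R_step hp]
  have hE := E_step x y k M u (by rw [← hu]; push_cast; ring)
  have huv : M + N + 1 = u + v := by
    have : (M : ℤ) + N + 1 = u + v := by rw [← hu, ← hv]; push_cast; ring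
    exact_mod_cast this
  rw [huv, pow_add]
  linear_combination ((1 - (x * y) ^ v) * R (x * y) u * R (x * y) v) * hE

noncomputable def S (x y : ℂ) (M N : ℕ) : ℂ :=
  ∑' k : ℤ, R (x * y) (M - k) * R (x * y) (N + k) * E x y k

lemma summ (x y : ℂ) (M N : ℕ) :
    Summable fun k : ℤ => R (x * y) (M - k) * R (x * y) (N + k) * E x y k := by
  apply summable_of_ne_finset_zero (s := Finset.Icc (-(N : ℤ)) M)
  intro k hk
  rw [Finset.mem_Icc, not_and_or] at hk
  rcases hk with h | h
  · rw [R_neg (k := N + k) _ (by linarith)]; ring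
  · rw [R_neg (k := M - k) _ (by linarith)]; ring

lemma S_step {x y : ℂ} (hp : ‖x * y‖ < 1) (M N : ℕ) :
    (1 - (x * y) ^ (M + N + 1)) * S x y (M + 1) N = (1 + x * (x * y) ^ M) * S x y M N := by
  have hs := summ x y M N
  have hs' := (Equiv.subRight (1 : ℤ)).summable_iff.mpr hs
  have ht := (Equiv.subRight (1 : ℤ)).tsum_eq
    (fun k : ℤ => R (x * y) (M - k) * R (x * y) (N + k) * E x y k)
  unfold S
  rw [← tsum_mul_left, add_mul, one_mul]
  conv_rhs => arg 2; rw [← ht]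
  rw [← tsum_mul_left]
  refine Eq.trans ?_ (hs.tsum_add (hs'.mul_left (x * (x * y) ^ M)))
  exact tsum_congr fun k => term_step hp M N k

lemma S_symm (x y : ℂ) (M N : ℕ) : S x y M N = S y x N M := by
  unfold S
  rw [← (Equiv.neg ℤ).tsum_eq]
  refine tsum_congr fun k => ?_
  simp only [Equiv.neg_apply]
  rw [E_neg, mul_comm y x, sub_neg_eq_add, ← sub_eq_add_neg]
  ring

lemma S_zero (x y : ℂ) : S x y 0 0 = 1 := by
  unfold S
  rw [tsum_eq_single 0]
  · simp [R, E, P, T]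
  · intro k hk
    rcases lt_or_gt_of_ne hk with h | h
    · rw [R_neg (k := (0 : ℕ) + k) _ (by simpa using h)]; ring
    · rw [R_neg (k := (0 : ℕ) - k) _ (by simpa using h)]; ring

lemma finite_jtp_s9 {x y : ℂ} (hp : ‖x * y‖ < 1) (N : ℕ) :
    P (x * y) (N + N) * S x y N N =
      (∏ n ∈ Finset.range N, (1 + x * (x * y) ^ n)) *
      (∏ n ∈ Finset.range N, (1 + y * (x * y) ^ n)) := by
  induction N with
  | zero => simp [S_zero, P]
  | succ N ih =>
    have h1 := S_step hp N N
    have h2 := S_step (x := y) (y := x) (by rwa [mul_comm]) N (N + 1)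
    rw [S_symm y x, S_symm y x, mul_comm y x] at h2
    rw [Finset.prod_range_succ, Finset.prod_range_succ,
      show N + 1 + (N + 1) = N + N + 1 + 1 by ring]
    have e1 : P (x * y) (N + N + 1 + 1) =
      P (x * y) (N + N) * (1 - (x * y) ^ (N + N + 1)) * (1 - (x * y) ^ (N + N + 1 + 1)) := by
      unfold P; rw [Finset.prod_range_succ, Finset.prod_range_succ]
    rw [e1]
    rw [show N + (N + 1) + 1 = N + N + 1 + 1 by ring] at h2
    linear_combination (P (x * y) (N + N) * (1 - (x * y) ^ (N + N + 1))) * h2 +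
      (P (x * y) (N + N) * (1 + y * (x * y) ^ N)) * h1 +
      (1 + x * (x * y) ^ N) * (1 + y * (x * y) ^ N) * ih

lemma norm_E_le {x y : ℂ} {r : ℝ} (hx : ‖x‖ ≤ r) (hy : ‖y‖ ≤ r) (hr : r < 1) (k : ℤ) :
    ‖E x y k‖ ≤ r ^ k.natAbs := by
  have hr0 : 0 ≤ r := (norm_nonneg x).trans hx
  have h0 := two_T k
  have h1 := two_T (k - 1)
  have hle : k.natAbs ≤ T k + T (k - 1) := by
    have e : ((T k + T (k - 1) : ℕ) : ℤ) = (k.natAbs : ℤ) ^ 2 := by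
      push_cast; rw [sq_abs]; linarith
    have e' : T k + T (k - 1) = k.natAbs ^ 2 := by exact_mod_cast e
    rw [e']; exact Nat.le_self_pow two_ne_zero _
  calc ‖E x y k‖ = ‖x‖ ^ T k * ‖y‖ ^ T (k - 1) := by simp [E]
    _ ≤ r ^ T k * r ^ T (k - 1) := by gcongr
    _ = r ^ (T k + T (k - 1)) := by rw [pow_add]
    _ ≤ _ := pow_le_pow_of_le_one hr0 hr.le hle

lemma summable_natAbs {r : ℝ} (hr0 : 0 ≤ r) (hr : r < 1) :
    Summable fun k : ℤ => r ^ k.natAbs := by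
  apply Summable.of_nat_of_neg <;> simpa using summable_geometric_of_lt_one hr0 hr

lemma mult_aux (x : ℂ) {p : ℂ} (hp : ‖p‖ < 1) : Multipliable fun n : ℕ => 1 + x * p ^ n :=
  Complex.multipliable_one_add_of_summable ((summable_geometric_of_norm_lt_one hp).mul_left x)

lemma jtp_s9 {x y : ℂ} (hx : ‖x‖ < 1) (hy : ‖y‖ < 1) :
    ∑' k : ℤ, E x y k = ∏' n : ℕ, ((1 - (x * y) ^ (n + 1)) *
      (1 + x * (x * y) ^ n) * (1 + y * (x * y) ^ n)) := by
  have hp : ‖x * y‖ < 1 := by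
    rw [norm_mul]; exact mul_lt_one_of_nonneg_of_lt_one_left (norm_nonneg _) hx hy.le
  have hmP : Multipliable fun n : ℕ => 1 - (x * y) ^ (n + 1) :=
    ModularForm.multipliable_one_sub_pow hp
  have hmx := mult_aux x hp
  have hmy := mult_aux y hp
  rw [(hmP.mul hmx).tprod_mul hmy, hmP.tprod_mul hmx]
  set p := x * y with hpdef
  set Q := ∏' n : ℕ, (1 - p ^ (n + 1)) with hQ
  have hQ0 : Q ≠ 0 := by
    have hsm : Summable fun n : ℕ => ‖-p ^ (n + 1)‖ := by
      simpa using (summable_nat_add_iff 1).mpr (summable_geometric_of_lt_one (norm_nonneg _) hp)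
    have := tprod_one_add_ne_zero_of_summable (f := fun n : ℕ => -p ^ (n + 1))
      (fun n => by simpa [sub_eq_add_neg] using fac_ne hp n)
      hsm
    simpa [hQ, sub_eq_add_neg] using this
  have hPt : Tendsto (P p) atTop (𝓝 Q) := hmP.tendsto_prod_tprod_nat
  have hRt : Tendsto (fun n : ℕ => R p n) atTop (𝓝 Q⁻¹) := by
    simp_rw [R_nat]; exact hPt.inv₀ hQ0
  have hRz : Tendsto (R p) atTop (𝓝 Q⁻¹) := by
    have h := hRt.comp (tendsto_atTop_atTop.mpr fun b =>
      ⟨(b : ℤ), fun c hc => by omega⟩ : Tendsto Int.toNat atTop atTop)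
    refine h.congr' ?_
    filter_upwards [eventually_ge_atTop (0 : ℤ)] with k hk
    simp [Int.toNat_of_nonneg hk]
  obtain ⟨C, hC⟩ : ∃ C, ∀ k : ℤ, ‖R p k‖ ≤ C := by
    obtain ⟨C, hC⟩ := hRt.norm.bddAbove_range
    refine ⟨C, fun k => ?_⟩
    have hC' : ∀ n : ℕ, ‖R p n‖ ≤ C := fun n => hC ⟨n, rfl⟩
    rcases lt_or_ge k 0 with h | h
    · rw [R_neg _ h, norm_zero]; exact (norm_nonneg _).trans (hC' 0)
    · lift k to ℕ using h
      exact hC' k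
  have hC0 : 0 ≤ C := (norm_nonneg _).trans (hC 0)
  have hcast : Tendsto (fun n : ℕ => (n : ℤ)) atTop atTop := tendsto_natCast_atTop_atTop
  have hSt : Tendsto (fun N : ℕ => S x y N N) atTop (𝓝 (∑' k : ℤ, Q⁻¹ * Q⁻¹ * E x y k)) := by
    unfold S
    refine tendsto_tsum_of_dominated_convergence
      (bound := fun k : ℤ => C * C * (max ‖x‖ ‖y‖) ^ k.natAbs)
      ((summable_natAbs (le_max_of_le_left (norm_nonneg _)) (max_lt hx hy)).mul_left _) ?_ ?_
    · intro k
      refine Tendsto.mul_const _ (Tendsto.mul ?_ ?_)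
      · exact hRz.comp (tendsto_atTop_add_const_right _ (-k) hcast)
      · exact hRz.comp (tendsto_atTop_add_const_right _ k hcast)
    · refine Eventually.of_forall fun N k => ?_
      rw [norm_mul, norm_mul]
      have := norm_E_le (le_max_left ‖x‖ ‖y‖) (le_max_right ‖x‖ ‖y‖) (max_lt hx hy) k
      gcongr
      · exact hC _
      · exact hC _
  have hN2 : Tendsto (fun N : ℕ => N + N) atTop atTop :=
    tendsto_atTop_mono (fun n => Nat.le_add_left n n) tendsto_id
  have hL := (hPt.comp hN2).mul hSt
  have hR := hmx.tendsto_prod_tprod_nat.mul hmy.tendsto_prod_tprod_nat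
  have key := tendsto_nhds_unique (hL.congr fun N => finite_jtp_s9 hp N) hR
  rw [tsum_mul_left] at key
  rw [mul_assoc, ← key]
  field_simp

lemma exists_k (a : ℕ) (ha : a = 1 ∨ a = 3) (j : ℕ) (t : ℤ)
    (h : 16 * (j : ℤ) + (a : ℤ) ^ 2 = t ^ 2) : ∃ k : ℤ, (j : ℤ) = 4 * k ^ 2 + a * k := by
  have hm : t % 8 = a ∨ (-t) % 8 = a := by
    have h8 : t % 8 = 0 ∨ t % 8 = 1 ∨ t % 8 = 2 ∨ t % 8 = 3 ∨ t % 8 = 4 ∨ t % 8 = 5 ∨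
      t % 8 = 6 ∨ t % 8 = 7 := by omega
    obtain ⟨s, hs⟩ : ∃ s, s = t / 8 := ⟨_, rfl⟩
    rcases ha with rfl | rfl <;> rcases h8 with h8 | h8 | h8 | h8 | h8 | h8 | h8 | h8 <;>
    first
    | (left; push_cast; omega)
    | (right; push_cast; omega)
    | (exfalso
       have ht : t = 8 * s + t % 8 := by omega
       rw [h8] at ht
       rw [ht] at h
       ring_nf at h
       omega)
  rcases hm with hm | hm
  · refine ⟨t / 8, ?_⟩
    have ht : t = 8 * (t / 8) + a := by omega
    generalize t / 8 = s at *
    rw [ht] at h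
    linarith
  · refine ⟨(-t) / 8, ?_⟩
    have ht : -t = 8 * (-t / 8) + a := by omega
    rw [← neg_sq t] at h
    generalize -t / 8 = s at *
    rw [ht] at h
    linarith

end JTP

/-- For `a ∈ {1,3}` and `|q| < 1`:
`Σ_{j ∈ S_a} q^j = ∏_{n=1}^∞ (1 − q^{8n})(1 + q^{8n−4+a})(1 + q^{8n−4−a})`,
where `S_a` is the set of non-negative integers `j` with `16j + a²` a perfect square.
(The product below is indexed by `n : ℕ` with `n + 1` playing the role of `n ≥ 1`,
so the factors are `(1 − q^{8n+8})(1 + q^{8n+4+a})(1 + q^{8n+4−a})`.) -/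
theorem stmt9 (a : ℕ) (ha : a = 1 ∨ a = 3) (q : ℂ) (hq : ‖q‖ < 1) :
    (∑' j : {j : ℕ // ∃ t : ℤ, 16 * (j : ℤ) + (a : ℤ) ^ 2 = t ^ 2}, q ^ (j : ℕ)) =
    ∏' n : ℕ, ((1 - q ^ (8 * n + 8)) * (1 + q ^ (8 * n + 4 + a)) * (1 + q ^ (8 * n + 4 - a))) := by
  have hnn : ∀ k : ℤ, 0 ≤ 4 * k ^ 2 + (a : ℤ) * k := by
    intro k
    have : (a : ℤ) ≤ 3 := by rcases ha with rfl | rfl <;> norm_num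
    have h0 : (0 : ℤ) ≤ a := by positivity
    rcases le_or_gt 0 k with h | h
    · positivity
    · nlinarith
  have hx : ‖q ^ (4 + a)‖ < 1 := by
    rw [norm_pow]; exact pow_lt_one₀ (norm_nonneg _) hq (by omega)
  have hy : ‖q ^ (4 - a)‖ < 1 := by
    rw [norm_pow]; exact pow_lt_one₀ (norm_nonneg _) hq (by omega)
  have hxy : q ^ (4 + a) * q ^ (4 - a) = q ^ 8 := by
    rw [← pow_add]; congr 1; omega
  have hj := JTP.jtp_s9 hx hy
  rw [hxy] at hj
  have hprod : ∀ n : ℕ, (1 - (q ^ 8) ^ (n + 1)) * (1 + q ^ (4 + a) * (q ^ 8) ^ n) *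
      (1 + q ^ (4 - a) * (q ^ 8) ^ n) =
      (1 - q ^ (8 * n + 8)) * (1 + q ^ (8 * n + 4 + a)) * (1 + q ^ (8 * n + 4 - a)) := by
    intro n
    rw [← pow_mul, ← pow_mul, ← pow_add, ← pow_add,
      show 8 * (n + 1) = 8 * n + 8 by ring, show 4 + a + 8 * n = 8 * n + 4 + a by ring,
      show 4 - a + 8 * n = 8 * n + 4 - a by omega]
  rw [tprod_congr hprod] at hj
  rw [← hj]
  let f : ℤ → {j : ℕ // ∃ t : ℤ, 16 * (j : ℤ) + (a : ℤ) ^ 2 = t ^ 2} := fun k =>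
    ⟨(4 * k ^ 2 + (a : ℤ) * k).toNat, 8 * k + a, by
      rw [Int.toNat_of_nonneg (hnn k)]; ring⟩
  have hf : Function.Bijective f := by
    constructor
    · intro k l hkl
      have h1 : (4 * k ^ 2 + (a : ℤ) * k).toNat = (4 * l ^ 2 + (a : ℤ) * l).toNat :=
        congrArg Subtype.val hkl
      have h2 : 4 * k ^ 2 + (a : ℤ) * k = 4 * l ^ 2 + (a : ℤ) * l := by
        rw [← Int.toNat_of_nonneg (hnn k), ← Int.toNat_of_nonneg (hnn l), h1]
      have h3 : (k - l) * (4 * (k + l) + a) = 0 := by linarith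
      rcases mul_eq_zero.mp h3 with h | h
      · linarith
      · exfalso; omega
    · rintro ⟨j, t, ht⟩
      obtain ⟨k, hk⟩ := JTP.exists_k a ha j t ht
      refine ⟨k, Subtype.ext ?_⟩
      change (4 * k ^ 2 + (a : ℤ) * k).toNat = j
      rw [← hk]; simp
  rw [← (Equiv.ofBijective f hf).tsum_eq]
  refine tsum_congr fun k => ?_
  change q ^ (4 * k ^ 2 + (a : ℤ) * k).toNat = _
  unfold JTP.E
  rw [← pow_mul, ← pow_mul, ← pow_add]
  congr 1
  have h0 := JTP.two_T k
  have h1 := JTP.two_T (k - 1)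
  have h4 : ((4 - a : ℕ) : ℤ) = 4 - a := by push_cast [show a ≤ 4 by omega]; ring
  zify
  rw [Int.toNat_of_nonneg (hnn k), h4]
  refine mul_left_cancel₀ (two_ne_zero (α := ℤ)) ?_
  linear_combination -(4 + (a : ℤ)) * h0 - (4 - (a : ℤ)) * h1
end
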